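/- arXiv:2409.13553 — 5 statements merged into one kernel-verified Lean document; each statement's English description precedes it below -/
import Mathlib

section
/- Let F be a field, n ≥ 1 an integer, and a ∈ F[t] a polynomial with 1 ≤ ord(a) ≤ n. Write s = ord(a). Then the F-linear endomorphism of F[t]/(t^n) given by multiplication by a is nilpotent, and its Jordan type is the almost rectangular partition [n]^s of n into s parts, each equal to ⌈n/s⌉ or ⌊n/s⌋. -/
open Polynomial

noncomputable section

/-- The quotient module `F[t]/(t^m)`. -/
abbrev PQ (F : Type*) [Field F] (m : ℕ) : Type _ := F[X] ⧸ Ideal.span {(X : F[X]) ^ m}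

variable (F : Type*) [Field F]

lemma mulQ_cond (m m' : ℕ) (c : F[X]) (h : (X : F[X]) ^ m' ∣ c * X ^ m) :
    Ideal.span {(X : F[X]) ^ m} ≤
      Submodule.comap (LinearMap.mulLeft F[X] c) (Ideal.span {(X : F[X]) ^ m'}) := by
  rw [Ideal.span_le]
  intro x hx
  rw [Set.mem_singleton_iff] at hx
  subst hx
  simp only [SetLike.mem_coe, Submodule.mem_comap, LinearMap.mulLeft_apply]
  exact Ideal.mem_span_singleton.mpr h

/-- The `F`-linear map `F[t]/(t^m) → F[t]/(t^{m'})` induced by multiplication by the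
polynomial `c`, well-defined whenever `t^{m'} ∣ c · t^m`. -/
def mulQ (m m' : ℕ) (c : F[X]) (h : (X : F[X]) ^ m' ∣ c * X ^ m) :
    PQ F m →ₗ[F] PQ F m' :=
  LinearMap.restrictScalars F
    (Submodule.mapQ (Ideal.span {(X : F[X]) ^ m}) (Ideal.span {(X : F[X]) ^ m'})
      (LinearMap.mulLeft F[X] c) (mulQ_cond F m m' c h))

lemma dvd_A (u : ℕ) (c : F[X]) : (X : F[X]) ^ u ∣ c * X ^ u := Dvd.intro c (mul_comm _ _)

lemma dvd_G (u r : ℕ) (hru : r ≤ u) (g : F[X]) :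
    (X : F[X]) ^ u ∣ (X ^ r * g) * X ^ (u - r) := by
  refine Dvd.intro g ?_
  rw [mul_comm ((X:F[X])^r) g, mul_assoc, ← pow_add, Nat.add_sub_cancel' hru, mul_comm]

lemma dvd_H (u r : ℕ) (h : F[X]) : (X : F[X]) ^ (u - r) ∣ h * X ^ u :=
  Dvd.dvd.mul_left (pow_dvd_pow _ (Nat.sub_le u r)) h

/-- The `F[t]`-module endomorphism of `V = F[t]/(t^u) ⊕ t^r·F[t]/(t^u)` given by
`M(v₁, v₂) = (a v₁ + g v₂, h t^r v₁ + b v₂)`, where the second summand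
`t^r·F[t]/(t^u)` is identified with `F[t]/(t^{u-r})` via `w ↦ t^r w`
(so the lower-left entry becomes `v₁ ↦ h v₁ mod t^{u-r}` and the upper-right
entry becomes `w ↦ t^r g w mod t^u`). -/
def Mmap (u r : ℕ) (hru : r ≤ u) (a g h b : F[X]) :
    (PQ F u × PQ F (u - r)) →ₗ[F] (PQ F u × PQ F (u - r)) :=
  LinearMap.prod
    ((mulQ F u u a (dvd_A F u a)).comp (LinearMap.fst F (PQ F u) (PQ F (u - r))) +
      (mulQ F (u - r) u (X ^ r * g) (dvd_G F u r hru g)).comp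
        (LinearMap.snd F (PQ F u) (PQ F (u - r))))
    ((mulQ F u (u - r) h (dvd_H F u r h)).comp (LinearMap.fst F (PQ F u) (PQ F (u - r))) +
      (mulQ F (u - r) (u - r) b (dvd_A F (u - r) b)).comp
        (LinearMap.snd F (PQ F u) (PQ F (u - r))))

/-- `B` has Jordan type `P` (a partition given as the multiset of its parts):
the corank of every power of `B` is the one prescribed by `P`, i.e.
`dim ker (B^s) = Σ_i min(pᵢ, s)` for all `s ≥ 0`. -/
def JordanTypeIs {V : Type*} [AddCommGroup V] [Module F V] (B : Module.End F V)
    (P : Multiset ℕ) : Prop :=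
  ∀ s : ℕ, Module.finrank F (LinearMap.ker (B ^ s)) = (P.map fun p => min p s).sum

/-- Index type for the `N = 4u-3r-2` coordinates
`(a_1,…,a_{u−1}, b_1,…,b_{u−r−1}, g_0,…,g_{u−r−1}, h_0,…,h_{u−r−1})`. -/
abbrev Vars (u r : ℕ) : Type := Fin (u - 1) ⊕ Fin (u - r - 1) ⊕ Fin (u - r) ⊕ Fin (u - r)

/-- `a = Σ_{i=1}^{u−1} a_i t^i`. -/
def paOf (u r : ℕ) (x : Vars u r → F) : F[X] :=
  ∑ i : Fin (u - 1), C (x (Sum.inl i)) * X ^ ((i : ℕ) + 1)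

/-- `b = Σ_{i=1}^{u−r−1} b_i t^i`. -/
def pbOf (u r : ℕ) (x : Vars u r → F) : F[X] :=
  ∑ i : Fin (u - r - 1), C (x (Sum.inr (Sum.inl i))) * X ^ ((i : ℕ) + 1)

/-- `g = Σ_{i=0}^{u−r−1} g_i t^i`. -/
def pgOf (u r : ℕ) (x : Vars u r → F) : F[X] :=
  ∑ i : Fin (u - r), C (x (Sum.inr (Sum.inr (Sum.inl i)))) * X ^ (i : ℕ)

/-- `h = Σ_{i=0}^{u−r−1} h_i t^i`. -/
def phOf (u r : ℕ) (x : Vars u r → F) : F[X] :=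
  ∑ i : Fin (u - r), C (x (Sum.inr (Sum.inr (Sum.inr i)))) * X ^ (i : ℕ)

/-- The nilpotent endomorphism `M_x` of `V` determined by the point `x ∈ F^N`. -/
def Mx (u r : ℕ) (hru : r ≤ u) (x : Vars u r → F) :
    Module.End F (PQ F u × PQ F (u - r)) :=
  Mmap F u r hru (paOf F u r x) (pgOf F u r x) (phOf F u r x) (pbOf F u r x)

/-- The variable `a_i` as a polynomial function on `F^N` (meaningful for `1 ≤ i ≤ u-1`). -/
def Av (u r : ℕ) (i : ℕ) : MvPolynomial (Vars u r) F :=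
  if h : i - 1 < u - 1 then MvPolynomial.X (Sum.inl ⟨i - 1, h⟩) else 0

/-- The variable `b_i` as a polynomial function on `F^N` (meaningful for `1 ≤ i ≤ u-r-1`). -/
def Bv (u r : ℕ) (i : ℕ) : MvPolynomial (Vars u r) F :=
  if h : i - 1 < u - r - 1 then MvPolynomial.X (Sum.inr (Sum.inl ⟨i - 1, h⟩)) else 0

/-- The variable `g_i` as a polynomial function on `F^N` (meaningful for `0 ≤ i ≤ u-r-1`). -/
def Gv (u r : ℕ) (i : ℕ) : MvPolynomial (Vars u r) F :=
  if h : i < u - r then MvPolynomial.X (Sum.inr (Sum.inr (Sum.inl ⟨i, h⟩))) else 0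

/-- The variable `h_i` as a polynomial function on `F^N` (meaningful for `0 ≤ i ≤ u-r-1`). -/
def Hv (u r : ℕ) (i : ℕ) : MvPolynomial (Vars u r) F :=
  if h : i < u - r then MvPolynomial.X (Sum.inr (Sum.inr (Sum.inr ⟨i, h⟩))) else 0

/-- The set of polynomials `E^Q_{k,l}` for `Q = (u, u-r)`:
`{a_1,…,a_{k−1}, b_1,…,b_{l−1}}` if `k+l ≤ r`, and
`{a_1,…,a_{k−1}, b_1,…,b_{r−k−1}}` together with the quadratic polynomials
`Σ_{j=0}^{m} a_{k+j} b_{r−k+m−j} − Σ_{j=0}^{m} g_j h_{m−j}` for `0 ≤ m ≤ k+l−r−1`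
if `k+l ≥ r+1`. -/
def Eset (u r k l : ℕ) : Set (MvPolynomial (Vars u r) F) :=
  if k + l ≤ r then
    {p | ∃ i, 1 ≤ i ∧ i ≤ k - 1 ∧ p = Av F u r i} ∪
      {p | ∃ i, 1 ≤ i ∧ i ≤ l - 1 ∧ p = Bv F u r i}
  else
    {p | ∃ i, 1 ≤ i ∧ i ≤ k - 1 ∧ p = Av F u r i} ∪
      {p | ∃ i, 1 ≤ i ∧ i ≤ r - k - 1 ∧ p = Bv F u r i} ∪
      {p | ∃ m, m ≤ k + l - r - 1 ∧ p =
        (∑ j ∈ Finset.range (m + 1), Av F u r (k + j) * Bv F u r (r - k + m - j)) -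
          (∑ j ∈ Finset.range (m + 1), Gv F u r j * Hv F u r (m - j))}

/-- The common zero locus in `F^N` of a set `T` of polynomials. -/
def zLocus (u r : ℕ) (T : Set (MvPolynomial (Vars u r) F)) : Set (Vars u r → F) :=
  {x | ∀ p ∈ T, MvPolynomial.eval x p = 0}

/-- `X^Q_{k,l}`, the common zero locus of `E^Q_{k,l}`. -/
def Xlocus (u r k l : ℕ) : Set (Vars u r → F) := zLocus F u r (Eset F u r k l)

/-- Zariski-closed subsets of `F^N`: common zero loci of sets of polynomials. -/
def IsZClosed (u r : ℕ) (S : Set (Vars u r → F)) : Prop :=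
  ∃ T : Set (MvPolynomial (Vars u r) F), S = zLocus F u r T

/-- The Zariski closure of a subset of `F^N`. -/
def zClosure (u r : ℕ) (S : Set (Vars u r → F)) : Set (Vars u r → F) :=
  ⋂₀ {C | IsZClosed F u r C ∧ S ⊆ C}

end

section Burge

/-- Scanning the frequency sequence `f` downward from `j`, forming backward pairs:
whenever `f j > 0` (and `j` has not been consumed by a previously formed pair),
put `j` in the set and consume the index `j - 1`. -/
def RsetGo (f : ℕ → ℕ) : ℕ → Finset ℕ
  | 0 => ∅
  | 1 => if 0 < f 1 then {1} else ∅
  | (j + 2) => if 0 < f (j + 2) then insert (j + 2) (RsetGo f j) else RsetGo f (j + 1)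

/-- The set `R(P)` of a partition `P` (given as the multiset of its parts, with
frequency sequence `j ↦ P.count j`); the scan starts at the largest part `P.sup`. -/
def Rset (P : Multiset ℕ) : Finset ℕ := RsetGo (fun j => P.count j) P.sup

/-- The partition `∂P`: for each `j ∈ R(P)` one copy of the part `j` is replaced by
`j - 1` (discarded when `j - 1 = 0`). -/
def dP (P : Multiset ℕ) : Multiset ℕ :=
  (P - (Rset P).val) + (((Rset P).val.map fun j => j - 1).filter fun j => 0 < j)

/-- Fuel-driven computation of the Burge code; `false` stands for `α`, `true` for `β`.
(The fuel `P.sum + 1` used in `burgeCode` always suffices, since `∂` strictly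
decreases the size of a nonempty partition.) -/
def burgeGo : ℕ → Multiset ℕ → List Bool
  | 0, _ => []
  | (n + 1), P =>
    if P = 0 then [false]
    else (if 1 ∈ Rset P then true else false) :: burgeGo n (dP P)

/-- The Burge code of the partition `P`: the word `w_1 ⋯ w_m` with `w_i = β` (`true`)
if `∂^{i-1} P` is in class `B` (i.e. `1 ∈ R(∂^{i-1}P)`) and `w_i = α` (`false`)
otherwise, where `m = min { i : ∂^{i-1} P = (0) }`. -/
def burgeCode (P : Multiset ℕ) : List Bool := burgeGo (P.sum + 1) P

/-- The almost rectangular partition `[m]^k` of `m` into `k` parts, each equal to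
`⌈m/k⌉` or `⌊m/k⌋`. -/
def arPart (m k : ℕ) : Multiset ℕ :=
  Multiset.replicate (m % k) (m / k + 1) + Multiset.replicate (k - m % k) (m / k)

/-- Greedy decomposition of a weakly decreasing list of parts into maximal
almost rectangular segments from the top (fuel-driven helper). -/
def greedyGo : ℕ → List ℕ → List (List ℕ)
  | 0, _ => []
  | _ + 1, [] => []
  | n + 1, p :: rest =>
    ((p :: rest).takeWhile fun q => decide (p ≤ q + 1)) ::
      greedyGo n ((p :: rest).dropWhile fun q => decide (p ≤ q + 1))

/-- The greedy decomposition of a weakly decreasing list of parts into maximal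
almost rectangular subpartitions from the top. -/
def greedy (l : List ℕ) : List (List ℕ) := greedyGo l.length l

end Burge


lemma mulQ_mk (F : Type*) [Field F] (m m' : ℕ) (c : F[X]) (h : (X : F[X]) ^ m' ∣ c * X ^ m)
    (f : F[X]) :
    mulQ F m m' c h (Ideal.Quotient.mk _ f) = Ideal.Quotient.mk _ (c * f) := rfl

lemma mulQ_pow_mk (F : Type*) [Field F] (n : ℕ) (a : F[X]) (j : ℕ) (f : F[X]) :
    (((mulQ F n n a (dvd_A F n a)) : Module.End F (PQ F n)) ^ j) (Ideal.Quotient.mk _ f)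
      = Ideal.Quotient.mk _ (a ^ j * f) := by
  induction j generalizing f with
  | zero => simp
  | succ k ih =>
    rw [pow_succ, Module.End.mul_apply, mulQ_mk, ih]
    congr 1
    ring

lemma finrank_PQ (F : Type*) [Field F] (m : ℕ) : Module.finrank F (PQ F m) = m := by
  have := finrank_quotient_span_eq_natDegree (K := F) (f := X ^ m)
  simpa using this

lemma finite_PQ (F : Type*) [Field F] (m : ℕ) : Module.Finite F (PQ F m) :=
  (monic_X_pow m).finite_quotient

lemma finrank_ker_aux (F : Type*) [Field F] (n k : ℕ) (hk : k ≤ n) (B : Module.End F (PQ F n))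
    (hB : ∀ f : F[X], B (Ideal.Quotient.mk _ f) = 0 ↔ (X : F[X]) ^ k ∣ f) :
    Module.finrank F (LinearMap.ker B) + k = n := by
  have := finite_PQ F n
  have hd : (X : F[X]) ^ k ∣ 1 * X ^ n := by simpa using pow_dvd_pow X hk
  have hker : LinearMap.ker B = LinearMap.ker (mulQ F n k 1 hd) := by
    ext x
    obtain ⟨f, rfl⟩ := Ideal.Quotient.mk_surjective x
    rw [LinearMap.mem_ker, LinearMap.mem_ker, hB, mulQ_mk, one_mul,
      Ideal.Quotient.eq_zero_iff_mem, Ideal.mem_span_singleton]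
  have hsurj : Function.Surjective (mulQ F n k 1 hd) := by
    intro y
    obtain ⟨f, rfl⟩ := Ideal.Quotient.mk_surjective y
    exact ⟨Ideal.Quotient.mk _ f, by rw [mulQ_mk, one_mul]⟩
  have h := LinearMap.finrank_range_add_finrank_ker (mulQ F n k 1 hd)
  rw [LinearMap.range_eq_top.2 hsurj, finrank_top, finrank_PQ, finrank_PQ] at h
  rw [hker]
  omega

lemma X_pow_dvd_iff_aux (F : Type*) [Field F] (n e : ℕ) (c f : F[X]) (hc : IsCoprime X c) :
    (X : F[X]) ^ n ∣ (X ^ e * c) * f ↔ (X : F[X]) ^ (n - e) ∣ f := by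
  rcases le_total n e with h | h
  · rw [Nat.sub_eq_zero_of_le h]
    simpa using ((pow_dvd_pow X h).mul_right c).mul_right f
  · obtain ⟨d, rfl⟩ := Nat.exists_eq_add_of_le h
    rw [Nat.add_sub_cancel_left, pow_add, mul_assoc,
      mul_dvd_mul_iff_left (pow_ne_zero _ X_ne_zero)]
    exact ⟨fun h => (hc.pow_left).dvd_of_dvd_mul_left h, fun h => h.mul_left c⟩

lemma arPart_sum_aux (n s j : ℕ) (hs : 1 ≤ s) :
    ((arPart n s).map fun p => min p j).sum + (n - s * j) = n := by
  have hr : n % s < s := Nat.mod_lt _ hs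
  have hn := Nat.mod_add_div n s
  simp only [arPart, Multiset.map_add, Multiset.map_replicate, Multiset.sum_add,
    Multiset.sum_replicate, smul_eq_mul]
  generalize n % s = r at *
  generalize n / s = q at *
  obtain ⟨t, rfl⟩ := Nat.exists_eq_add_of_lt hr
  subst hn
  rw [show r + t + 1 - r = t + 1 by omega]
  rcases le_or_gt j q with h | h
  · rw [min_eq_right h, min_eq_right (by omega)]
    obtain ⟨d, rfl⟩ := Nat.exists_eq_add_of_le h
    rw [show r + (r + t + 1) * (j + d) - (r + t + 1) * j = r + (r + t + 1) * d by
      rw [mul_add]; omega]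
    ring
  · rw [min_eq_left h.le, min_eq_left (by omega)]
    have : (r + t + 1) * (q + 1) ≤ (r + t + 1) * j := Nat.mul_le_mul_left _ h
    rw [Nat.sub_eq_zero_of_le (by nlinarith)]
    ring

/-- For a polynomial `a` with `1 ≤ ord(a) ≤ n`, multiplication by `a`
on `F[t]/(t^n)` is nilpotent, with Jordan type the almost rectangular partition
`[n]^{ord a}`. -/
theorem statement14 (F : Type*) [Field F] (n : ℕ) (hn : 1 ≤ n) (a : Polynomial F)
    (h1 : 1 ≤ a.trailingDegree) (h2 : a.trailingDegree ≤ (n : ℕ∞)) :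
    IsNilpotent ((mulQ F n n a (dvd_A F n a)) : Module.End F (PQ F n)) ∧
      JordanTypeIs F ((mulQ F n n a (dvd_A F n a)) : Module.End F (PQ F n))
        (arPart n a.natTrailingDegree) := by
  have ha : a ≠ 0 := by
    rintro rfl
    simp at h2
  have hs : 1 ≤ a.natTrailingDegree := by
    rw [trailingDegree_eq_natTrailingDegree ha] at h1
    exact_mod_cast h1
  obtain ⟨c, hc⟩ : (X : F[X]) ^ a.natTrailingDegree ∣ a :=
    X_pow_dvd_iff.2 fun d hd => coeff_eq_zero_of_lt_natTrailingDegree hd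
  have hcop : IsCoprime X c := by
    rw [irreducible_X.coprime_iff_not_dvd, X_dvd_iff]
    intro h0
    have : a.coeff a.natTrailingDegree = 0 := by
      have h5 := coeff_X_pow_mul c a.natTrailingDegree 0
      rw [zero_add, ← hc] at h5
      rw [h5, h0]
    exact ha (trailingCoeff_eq_zero.1 this)
  have key : ∀ j f, (((mulQ F n n a (dvd_A F n a)) : Module.End F (PQ F n)) ^ j)
      (Ideal.Quotient.mk _ f) = 0 ↔ (X : F[X]) ^ (n - a.natTrailingDegree * j) ∣ f := by
    intro j f
    rw [mulQ_pow_mk, Ideal.Quotient.eq_zero_iff_mem, Ideal.mem_span_singleton,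
      ← X_pow_dvd_iff_aux F n _ (c ^ j) f hcop.pow_right, pow_mul, ← mul_pow, ← hc]
  constructor
  · refine ⟨n, LinearMap.ext fun x => ?_⟩
    obtain ⟨f, rfl⟩ := Ideal.Quotient.mk_surjective x
    rw [LinearMap.zero_apply, key, Nat.sub_eq_zero_of_le (by nlinarith)]
    simp
  · intro j
    have h3 := finrank_ker_aux F n _ (Nat.sub_le _ _) _ (key j)
    have h4 := arPart_sum_aux n a.natTrailingDegree j hs
    omega
end

section
/- Let F be a field and let Q = (q_1 > q_2 > ⋯ > q_ℓ) be a stable partition of n, i.e., q_i − q_{i+1} ≥ 2 for all 1 ≤ i ≤ ℓ−1. Let J_Q ∈ M_n(F) be the nilpotent Jordan matrix with blocks of sizes q_1,…,q_ℓ. Then the set { B ∈ M_n(F) : B·J_Q = J_Q·B and B is nilpotent } is an F-linear subspace of M_n(F) (it is closed under addition and scalar multiplication and contains 0). -/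
open Polynomial

/-- The nilpotent Jordan matrix with blocks of sizes `q 0, …, q (ℓ-1)`:
the entry at `((i,a),(j,b))` is `1` if `i = j` and `b = a + 1`, and `0` otherwise. -/
def jordanMatrix (F : Type*) [Field F] {n : ℕ} (q : Fin n → ℕ) :
    Matrix ((i : Fin n) × Fin (q i)) ((i : Fin n) × Fin (q i)) F :=
  fun x y => if x.1 = y.1 ∧ (x.2 : ℕ) + 1 = (y.2 : ℕ) then 1 else 0

lemma jordan_mul_left (F : Type*) [Field F] {n : ℕ} (q : Fin n → ℕ)
    (B : Matrix ((i : Fin n) × Fin (q i)) ((i : Fin n) × Fin (q i)) F)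
    (i : Fin n) (a : Fin (q i)) (y : (i : Fin n) × Fin (q i)) :
    (jordanMatrix F q * B) ⟨i, a⟩ y =
      if h : (a : ℕ) + 1 < q i then B ⟨i, ⟨a + 1, h⟩⟩ y else 0 := by
  rw [Matrix.mul_apply]
  split_ifs with h
  · rw [Finset.sum_eq_single (⟨i, ⟨a + 1, h⟩⟩ : (i : Fin n) × Fin (q i))]
    · simp [jordanMatrix]
    · rintro ⟨j, b⟩ - hne
      have : ¬ (i = j ∧ (a : ℕ) + 1 = (b : ℕ)) := by
        rintro ⟨rfl, h2⟩
        apply hne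
        congr 1
        exact Fin.ext h2.symm
      simp [jordanMatrix, this]
    · simp
  · apply Finset.sum_eq_zero
    rintro ⟨j, b⟩ -
    have : ¬ (i = j ∧ (a : ℕ) + 1 = (b : ℕ)) := by
      rintro ⟨rfl, h2⟩
      have := b.2
      omega
    simp [jordanMatrix, this]

lemma jordan_mul_right_succ (F : Type*) [Field F] {n : ℕ} (q : Fin n → ℕ)
    (B : Matrix ((i : Fin n) × Fin (q i)) ((i : Fin n) × Fin (q i)) F)
    (x : (i : Fin n) × Fin (q i)) (j : Fin n) (b : ℕ) (hb : b + 1 < q j) :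
    (B * jordanMatrix F q) x ⟨j, ⟨b + 1, hb⟩⟩ = B x ⟨j, ⟨b, by omega⟩⟩ := by
  rw [Matrix.mul_apply,
    Finset.sum_eq_single (⟨j, ⟨b, by omega⟩⟩ : (i : Fin n) × Fin (q i))]
  · simp [jordanMatrix]
  · rintro ⟨i, a⟩ - hne
    have : ¬ (i = j ∧ (a : ℕ) = b) := by
      rintro ⟨rfl, h2⟩
      apply hne
      congr 1
      exact Fin.ext h2
    simp [jordanMatrix, this]
  · simp

lemma jordan_mul_right_zero (F : Type*) [Field F] {n : ℕ} (q : Fin n → ℕ)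
    (B : Matrix ((i : Fin n) × Fin (q i)) ((i : Fin n) × Fin (q i)) F)
    (x : (i : Fin n) × Fin (q i)) (j : Fin n) (hb : 0 < q j) :
    (B * jordanMatrix F q) x ⟨j, ⟨0, hb⟩⟩ = 0 := by
  rw [Matrix.mul_apply]
  apply Finset.sum_eq_zero
  rintro ⟨i, a⟩ -
  simp [jordanMatrix]

lemma comm_le (F : Type*) [Field F] {n : ℕ} (q : Fin n → ℕ)
    (B : Matrix ((i : Fin n) × Fin (q i)) ((i : Fin n) × Fin (q i)) F)
    (hB : B * jordanMatrix F q = jordanMatrix F q * B) (i j : Fin n) (a : ℕ) :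
    ∀ (b : ℕ) (ha : a < q i) (hb : b < q j), B ⟨i, ⟨a, ha⟩⟩ ⟨j, ⟨b, hb⟩⟩ ≠ 0 → a ≤ b := by
  induction a with
  | zero => intros; omega
  | succ a ih =>
    intro b ha hb h
    have e := congrFun (congrFun hB ⟨i, ⟨a, by omega⟩⟩) ⟨j, ⟨b, hb⟩⟩
    rw [jordan_mul_left, dif_pos ha] at e
    rw [← e] at h
    cases b with
    | zero => exact absurd (jordan_mul_right_zero F q B _ j hb) h
    | succ b =>
      rw [jordan_mul_right_succ] at h
      have := ih b _ _ h
      omega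

lemma comm_le_top (F : Type*) [Field F] {n : ℕ} (q : Fin n → ℕ)
    (B : Matrix ((i : Fin n) × Fin (q i)) ((i : Fin n) × Fin (q i)) F)
    (hB : B * jordanMatrix F q = jordanMatrix F q * B) (i j : Fin n) (k : ℕ) :
    ∀ (a b : ℕ) (ha : a < q i) (hb : b < q j), q i = a + 1 + k →
      B ⟨i, ⟨a, ha⟩⟩ ⟨j, ⟨b, hb⟩⟩ ≠ 0 → q j + a ≤ q i + b := by
  induction k with
  | zero =>
    intro a b ha hb hk h
    by_contra hlt
    have hb' : b + 1 < q j := by omega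
    have e := congrFun (congrFun hB ⟨i, ⟨a, ha⟩⟩) ⟨j, ⟨b + 1, hb'⟩⟩
    rw [jordan_mul_left, jordan_mul_right_succ, dif_neg (by simp only []; omega)] at e
    exact h e
  | succ k ih =>
    intro a b ha hb hk h
    by_cases hb' : b + 1 < q j
    · have ha' : a + 1 < q i := by omega
      have e := congrFun (congrFun hB ⟨i, ⟨a, ha⟩⟩) ⟨j, ⟨b + 1, hb'⟩⟩
      rw [jordan_mul_left, jordan_mul_right_succ, dif_pos ha'] at e
      rw [e] at h
      have := ih (a + 1) (b + 1) ha' hb' (by omega) h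
      omega
    · omega

lemma comm_weight (F : Type*) [Field F] {n : ℕ} (q : Fin n → ℕ) (hq : Function.Injective q)
    (B : Matrix ((i : Fin n) × Fin (q i)) ((i : Fin n) × Fin (q i)) F)
    (hB : B * jordanMatrix F q = jordanMatrix F q * B)
    (x y : (i : Fin n) × Fin (q i)) (h : B x y ≠ 0) :
    x = y ∨ 2 * (x.2 : ℤ) - q x.1 < 2 * (y.2 : ℤ) - q y.1 := by
  obtain ⟨i, a, ha⟩ := x
  obtain ⟨j, b, hb⟩ := y
  have h1 := comm_le F q B hB i j a b ha hb h
  have h2 := comm_le_top F q B hB i j (q i - a - 1) a b ha hb (by omega) h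
  by_cases hij : i = j
  · subst hij
    by_cases hab : a = b
    · subst hab
      exact Or.inl rfl
    · right
      simp only []
      omega
  · right
    have : q i ≠ q j := fun e => hij (hq e)
    simp only []
    omega

/-- Triangularity with respect to a weight function. -/
def WTri {F ι : Type*} [Field F] (w : ι → ℤ) (B : Matrix ι ι F) : Prop :=
  ∀ x y, B x y ≠ 0 → x = y ∨ w x < w y

lemma wtri_pow {F ι : Type*} [Field F] [Fintype ι] [DecidableEq ι] (w : ι → ℤ)
    (B : Matrix ι ι F) (hB : WTri w B) (k : ℕ) :
    WTri w (B ^ k) ∧ ∀ x, (B ^ k) x x = B x x ^ k := by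
  induction k with
  | zero =>
    refine ⟨fun x y h => Or.inl ?_, fun x => by simp⟩
    by_contra hne
    exact h (by simp [Matrix.one_apply_ne hne])
  | succ k ih =>
    refine ⟨fun x y h => ?_, fun x => ?_⟩
    · rw [pow_succ, Matrix.mul_apply] at h
      obtain ⟨z, -, hz⟩ := Finset.exists_ne_zero_of_sum_ne_zero h
      have h1 := ih.1 x z (left_ne_zero_of_mul hz)
      have h2 := hB z y (right_ne_zero_of_mul hz)
      rcases h1 with rfl | h1
      · exact h2
      · rcases h2 with rfl | h2
        · exact Or.inr h1
        · exact Or.inr (h1.trans h2)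
    · rw [pow_succ, Matrix.mul_apply, Finset.sum_eq_single x, ih.2 x, pow_succ]
      · intro z _ hzx
        by_contra hz
        have h1 := (ih.1 x z (left_ne_zero_of_mul hz)).resolve_left (Ne.symm hzx)
        have h2 := (hB z x (right_ne_zero_of_mul hz)).resolve_left hzx
        omega
      · simp

lemma wtri_pow_strict {F ι : Type*} [Field F] [Fintype ι] [DecidableEq ι] (w : ι → ℤ)
    (B : Matrix ι ι F) (hB : WTri w B) (hd : ∀ x, B x x = 0) (k : ℕ) :
    ∀ x y, (B ^ k) x y ≠ 0 → w x + k ≤ w y := by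
  induction k with
  | zero =>
    intro x y h
    have : x = y := by
      by_contra hne
      exact h (by simp [Matrix.one_apply_ne hne])
    simp [this]
  | succ k ih =>
    intro x y h
    rw [pow_succ, Matrix.mul_apply] at h
    obtain ⟨z, -, hz⟩ := Finset.exists_ne_zero_of_sum_ne_zero h
    have h1 := ih x z (left_ne_zero_of_mul hz)
    have h2 := hB z y (right_ne_zero_of_mul hz)
    rcases h2 with rfl | h2
    · exact absurd (hd z) (right_ne_zero_of_mul hz)
    · push_cast
      omega

lemma wtri_nilpotent_iff {F ι : Type*} [Field F] [Fintype ι] [DecidableEq ι] (w : ι → ℤ)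
    (B : Matrix ι ι F) (hB : WTri w B) : IsNilpotent B ↔ ∀ x, B x x = 0 := by
  constructor
  · rintro ⟨k, hk⟩ x
    have := (wtri_pow w B hB k).2 x
    rw [hk] at this
    exact eq_zero_of_pow_eq_zero this.symm
  · intro hd
    refine ⟨2 * (∑ x, (w x).natAbs) + 1, ?_⟩
    ext x y
    by_contra h
    have h1 := wtri_pow_strict w B hB hd _ x y h
    have hx := Finset.single_le_sum (f := fun x => (w x).natAbs) (fun i _ => Nat.zero_le _)
      (Finset.mem_univ x)
    have hy := Finset.single_le_sum (f := fun x => (w x).natAbs) (fun i _ => Nat.zero_le _)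
      (Finset.mem_univ y)
    omega

/-- For a stable partition `Q` (parts pairwise differing by at least 2),
the set of nilpotent matrices commuting with the Jordan matrix `J_Q` is an `F`-linear
subspace of the matrix algebra. -/
theorem statement15 (F : Type*) [Field F] (n : ℕ) (q : Fin n → ℕ)
    (hpos : ∀ i, 1 ≤ q i) (hstable : ∀ i j : Fin n, i < j → q j + 2 ≤ q i) :
    ∃ S : Submodule F (Matrix ((i : Fin n) × Fin (q i)) ((i : Fin n) × Fin (q i)) F),
      (S : Set (Matrix ((i : Fin n) × Fin (q i)) ((i : Fin n) × Fin (q i)) F)) =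
        {B | B * jordanMatrix F q = jordanMatrix F q * B ∧ IsNilpotent B} := by
  have hq : Function.Injective q := by
    intro i j e
    rcases lt_trichotomy i j with h | h | h
    · have := hstable i j h
      omega
    · exact h
    · have := hstable j i h
      omega
  refine ⟨{ carrier := {B | B * jordanMatrix F q = jordanMatrix F q * B ∧ ∀ x, B x x = 0}
            add_mem' := ?_
            zero_mem' := ?_
            smul_mem' := ?_ }, ?_⟩
  · rintro A B ⟨hA, hA'⟩ ⟨hB, hB'⟩
    exact ⟨by rw [add_mul, mul_add, hA, hB], fun x => by simp [hA', hB']⟩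
  · exact ⟨by simp, fun x => rfl⟩
  · rintro c B ⟨hB, hB'⟩
    exact ⟨by rw [smul_mul_assoc, mul_smul_comm, hB], fun x => by simp [hB']⟩
  · ext B
    refine and_congr_right fun hB => ?_
    exact (wtri_nilpotent_iff (fun x : (i : Fin n) × Fin (q i) => 2 * (x.2 : ℤ) - q x.1) B
      (comm_weight F q hq B hB)).symm
end

section
/- Let F be an infinite field, let u > r ≥ 2 be integers, and let 1 ≤ k, k′ ≤ r−1 and 1 ≤ l, l′ ≤ u−r. Then X^Q_{k′,l′} ⊆ X^Q_{k,l} (equivalently, every point of F^N at which all polynomials of E^Q_{k′,l′} vanish also annihilates all polynomials of E^Q_{k,l}) if and only if either (k = k′ and l ≤ l′), or (k ≤ k′ and l ≤ l′ and k′ + l ≤ r). -/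
open Polynomial

/-- The point of `F^N` with prescribed coordinate functions. -/
def ptOf {F : Type*} (u r : ℕ) (A B G H : ℕ → F) : Vars u r → F
  | Sum.inl i => A (i + 1)
  | Sum.inr (Sum.inl i) => B (i + 1)
  | Sum.inr (Sum.inr (Sum.inl i)) => G i
  | Sum.inr (Sum.inr (Sum.inr i)) => H i

lemma eval_Av {F : Type*} [Field F] (u r : ℕ) (A B G H : ℕ → F) (i : ℕ) (hi : 1 ≤ i) :
    MvPolynomial.eval (ptOf u r A B G H) (Av F u r i) = if i < u then A i else 0 := by
  unfold Av
  split_ifs with h1 h2 h2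
  · simp [ptOf, Nat.sub_add_cancel hi]
  · omega
  · omega
  · simp

lemma eval_Bv {F : Type*} [Field F] (u r : ℕ) (A B G H : ℕ → F) (i : ℕ) (hi : 1 ≤ i) :
    MvPolynomial.eval (ptOf u r A B G H) (Bv F u r i) = if i < u - r then B i else 0 := by
  unfold Bv
  split_ifs with h1 h2 h2
  · simp [ptOf, Nat.sub_add_cancel hi]
  · omega
  · omega
  · simp

lemma eval_Gv {F : Type*} [Field F] (u r : ℕ) (A B G H : ℕ → F) (i : ℕ) :
    MvPolynomial.eval (ptOf u r A B G H) (Gv F u r i) = if i < u - r then G i else 0 := by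
  unfold Gv
  split_ifs with h1
  · simp [ptOf]
  · simp

lemma eval_Hv {F : Type*} [Field F] (u r : ℕ) (A B G H : ℕ → F) (i : ℕ) :
    MvPolynomial.eval (ptOf u r A B G H) (Hv F u r i) = if i < u - r then H i else 0 := by
  unfold Hv
  split_ifs with h1
  · simp [ptOf]
  · simp

/-- Uniform description of the zero locus. -/
lemma mem_Xlocus_iff {F : Type*} [Field F] (u r k l : ℕ) (x : Vars u r → F) :
    x ∈ Xlocus F u r k l ↔
      (∀ i, 1 ≤ i → i < k → MvPolynomial.eval x (Av F u r i) = 0) ∧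
      (∀ i, 1 ≤ i → i < l → i < r - k → MvPolynomial.eval x (Bv F u r i) = 0) ∧
      (∀ m, r + m < k + l →
        (∑ j ∈ Finset.range (m + 1), MvPolynomial.eval x (Av F u r (k + j)) *
            MvPolynomial.eval x (Bv F u r (r - k + m - j))) -
          (∑ j ∈ Finset.range (m + 1), MvPolynomial.eval x (Gv F u r j) *
            MvPolynomial.eval x (Hv F u r (m - j))) = 0) := by
  unfold Xlocus zLocus Eset
  split_ifs with h
  · constructor
    · intro hx
      refine ⟨fun i h1 h2 => hx _ (Or.inl ⟨i, h1, by omega, rfl⟩),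
        fun i h1 h2 _ => hx _ (Or.inr ⟨i, h1, by omega, rfl⟩), fun m hm => by omega⟩
    · rintro ⟨ha, hb, -⟩ p (⟨i, h1, h2, rfl⟩ | ⟨i, h1, h2, rfl⟩)
      · exact ha i h1 (by omega)
      · exact hb i h1 (by omega) (by omega)
  · constructor
    · intro hx
      refine ⟨fun i h1 h2 => hx _ (Or.inl (Or.inl ⟨i, h1, by omega, rfl⟩)),
        fun i h1 _ h2 => hx _ (Or.inl (Or.inr ⟨i, h1, by omega, rfl⟩)), fun m hm => ?_⟩
      have := hx _ (Or.inr ⟨m, by omega, rfl⟩)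
      simpa only [map_sub, map_sum, map_mul] using this
    · rintro ⟨ha, hb, hc⟩ p ((⟨i, h1, h2, rfl⟩ | ⟨i, h1, h2, rfl⟩) | ⟨m, hm, rfl⟩)
      · exact ha i h1 (by omega)
      · exact hb i h1 (by omega) (by omega)
      · simpa only [map_sub, map_sum, map_mul] using hc m (by omega)

/-- `X^Q_{k′,l′} ⊆ X^Q_{k,l}` if and only if either `k = k′` and
`l ≤ l′`, or `k ≤ k′`, `l ≤ l′` and `k′ + l ≤ r`. -/
theorem statement16 (F : Type*) [Field F] [Infinite F] (u r k l k' l' : ℕ)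
    (hru : r < u) (hr : 2 ≤ r)
    (hk1 : 1 ≤ k) (hk2 : k ≤ r - 1) (hl1 : 1 ≤ l) (hl2 : l ≤ u - r)
    (hk1' : 1 ≤ k') (hk2' : k' ≤ r - 1) (hl1' : 1 ≤ l') (hl2' : l' ≤ u - r) :
    Xlocus F u r k' l' ⊆ Xlocus F u r k l ↔
      ((k = k' ∧ l ≤ l') ∨ (k ≤ k' ∧ l ≤ l' ∧ k' + l ≤ r)) := by
  constructor
  · intro hsub
    have hk : k ≤ k' := by
      by_contra hlt
      have hmem : ptOf u r (fun i => if i = k' then (1 : F) else 0) 0 0 0 ∈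
          Xlocus F u r k' l' := by
        rw [mem_Xlocus_iff]
        refine ⟨fun i h1 h2 => ?_, fun i h1 _ _ => ?_, fun m _ => ?_⟩
        · rw [eval_Av _ _ _ _ _ _ _ h1]
          simp [show i ≠ k' by omega]
        · rw [eval_Bv _ _ _ _ _ _ _ h1]
          simp
        · rw [Finset.sum_eq_zero, Finset.sum_eq_zero, sub_zero]
          · intro j hj
            rw [eval_Gv]
            simp
          · intro j hj
            rw [Finset.mem_range] at hj
            rw [eval_Bv _ _ _ _ _ _ _ (by omega)]
            simp
      have h := ((mem_Xlocus_iff _ _ _ _ _).1 (hsub hmem)).1 k' hk1' (by omega)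
      rw [eval_Av _ _ _ _ _ _ _ hk1'] at h
      simp [show k' < u by omega] at h
    have hmin : min l (r - k) ≤ min l' (r - k') := by
      by_contra hlt
      obtain ⟨i₀, hi₀⟩ : ∃ i₀, i₀ = min l' (r - k') := ⟨_, rfl⟩
      have hmem : ptOf u r 0 (fun i => if i = i₀ then (1 : F) else 0) 0 0 ∈
          Xlocus F u r k' l' := by
        rw [mem_Xlocus_iff]
        refine ⟨fun i h1 h2 => ?_, fun i h1 _ _ => ?_, fun m _ => ?_⟩
        · rw [eval_Av _ _ _ _ _ _ _ h1]
          simp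
        · rw [eval_Bv _ _ _ _ _ _ _ h1]
          simp [show i ≠ i₀ by omega]
        · rw [Finset.sum_eq_zero, Finset.sum_eq_zero, sub_zero]
          · intro j hj
            rw [eval_Gv]
            simp
          · intro j hj
            rw [eval_Av _ _ _ _ _ _ _ (by omega)]
            simp
      have h := ((mem_Xlocus_iff _ _ _ _ _).1 (hsub hmem)).2.1 i₀ (by omega) (by omega) (by omega)
      rw [eval_Bv _ _ _ _ _ _ _ (by omega)] at h
      simp [show i₀ < u - r by omega] at h
    have hquad : k = k' → l ≤ l' := by
      rintro rfl
      by_contra hlt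
      obtain ⟨m₀, hm₀⟩ : ∃ m₀, m₀ = k + l' - r := ⟨_, rfl⟩
      have hmem : ptOf u r 0 0 (fun i => if i = m₀ then (1 : F) else 0)
          (fun i => if i = 0 then (1 : F) else 0) ∈ Xlocus F u r k l' := by
        rw [mem_Xlocus_iff]
        refine ⟨fun i h1 h2 => ?_, fun i h1 _ _ => ?_, fun m _ => ?_⟩
        · rw [eval_Av _ _ _ _ _ _ _ h1]
          simp
        · rw [eval_Bv _ _ _ _ _ _ _ h1]
          simp
        · rw [Finset.sum_eq_zero, Finset.sum_eq_zero, sub_zero]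
          · intro j hj
            rw [Finset.mem_range] at hj
            rw [eval_Gv]
            simp [show j ≠ m₀ by omega]
          · intro j hj
            rw [eval_Av _ _ _ _ _ _ _ (by omega)]
            simp
      have h := ((mem_Xlocus_iff _ _ _ _ _).1 (hsub hmem)).2.2 m₀ (by omega)
      rw [Finset.sum_eq_zero, Finset.sum_eq_single m₀] at h
      · rw [eval_Gv, eval_Hv] at h
        simp [show m₀ < u - r by omega, show 0 < u - r by omega, show r < u by omega] at h
      · intro j _ hj
        rw [eval_Gv]
        simp [hj]
      · intro hj
        simp at hj
      · intro j hj
        rw [eval_Av _ _ _ _ _ _ _ (by omega)]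
        simp
    omega
  · intro hcond x hx
    rw [mem_Xlocus_iff] at hx ⊢
    obtain ⟨ha, hb, hc⟩ := hx
    refine ⟨fun i h1 h2 => ha i h1 (by omega),
      fun i h1 h2 h3 => hb i h1 (by omega) (by omega), fun m hm => ?_⟩
    have hkk : k = k' := by omega
    subst hkk
    exact hc m (by omega)
end

section
/- Let F be an infinite field and let Q = (5,2), so u = 5, r = 3 and N = 9 with coordinates x = (a_1, a_2, a_3, a_4, b_1, g_0, g_1, h_0, h_1) ∈ F^9. Then the Zariski closure in F^9 of the set { x ∈ F^9 : the Jordan type of M_x equals (3,3,1) } is exactly { x ∈ F^9 : a_1 = 0 and b_1 = 0 }. -/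
open Polynomial

section Helpers

/-- first component polynomial -/
noncomputable def polA {F : Type*} [Field F] (c : Fin 7 → F) : F[X] :=
  C (c 0) + C (c 1) * X + C (c 2) * X ^ 2 + C (c 3) * X ^ 3 + C (c 4) * X ^ 4

/-- second component polynomial -/
noncomputable def polB {F : Type*} [Field F] (c : Fin 7 → F) : F[X] :=
  C (c 5) + C (c 6) * X

/-- coordinates on `V` -/
noncomputable def piMap (F : Type*) [Field F] :
    (Fin 7 → F) →ₗ[F] (PQ F 5 × PQ F (5 - 3)) where
  toFun c := (Submodule.Quotient.mk (polA c), Submodule.Quotient.mk (polB c))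
  map_add' c d := by
    ext
    · simp only [Prod.fst_add, ← Submodule.Quotient.mk_add]
      congr 1
      simp only [polA, Pi.add_apply, C_add]; ring
    · simp only [Prod.snd_add, ← Submodule.Quotient.mk_add]
      congr 1
      simp only [polB, Pi.add_apply, C_add]; ring
  map_smul' k c := by
    ext
    · simp only [Prod.smul_fst, RingHom.id_apply, ← Submodule.Quotient.mk_smul]
      congr 1
      simp only [polA, Pi.smul_apply, smul_eq_mul, C_mul, smul_eq_C_mul]; ring
    · simp only [Prod.smul_snd, RingHom.id_apply, ← Submodule.Quotient.mk_smul]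
      congr 1
      simp only [polB, Pi.smul_apply, smul_eq_mul, C_mul, smul_eq_C_mul]; ring

lemma polA_coeff {F : Type*} [Field F] (c : Fin 7 → F) :
    (polA c).coeff 0 = c 0 ∧ (polA c).coeff 1 = c 1 ∧ (polA c).coeff 2 = c 2 ∧
    (polA c).coeff 3 = c 3 ∧ (polA c).coeff 4 = c 4 := by
  simp [polA, coeff_C, coeff_X, coeff_X_pow]

lemma polB_coeff {F : Type*} [Field F] (c : Fin 7 → F) :
    (polB c).coeff 0 = c 5 ∧ (polB c).coeff 1 = c 6 := by
  simp [polB, coeff_C, coeff_X]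

lemma piMap_bij (F : Type*) [Field F] : Function.Bijective (piMap F) := by
  constructor
  · rw [← LinearMap.ker_eq_bot, LinearMap.ker_eq_bot']
    intro c hc
    have h1 : (X : F[X]) ^ 5 ∣ polA c := by
      have := congrArg Prod.fst hc
      exact Ideal.mem_span_singleton.mp ((Submodule.Quotient.mk_eq_zero _).mp this)
    have h2 : (X : F[X]) ^ 2 ∣ polB c := by
      have := congrArg Prod.snd hc
      exact Ideal.mem_span_singleton.mp ((Submodule.Quotient.mk_eq_zero _).mp this)
    rw [X_pow_dvd_iff] at h1 h2
    obtain ⟨a0, a1, a2, a3, a4⟩ := polA_coeff c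
    obtain ⟨b0, b1⟩ := polB_coeff c
    funext i
    fin_cases i
    · exact a0.symm.trans (h1 0 (by norm_num))
    · exact a1.symm.trans (h1 1 (by norm_num))
    · exact a2.symm.trans (h1 2 (by norm_num))
    · exact a3.symm.trans (h1 3 (by norm_num))
    · exact a4.symm.trans (h1 4 (by norm_num))
    · exact b0.symm.trans (h2 0 (by norm_num))
    · exact b1.symm.trans (h2 1 (by norm_num))
  · rintro ⟨p, q⟩
    obtain ⟨p, rfl⟩ := Submodule.Quotient.mk_surjective _ p
    obtain ⟨q, rfl⟩ := Submodule.Quotient.mk_surjective _ q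
    refine ⟨![p.coeff 0, p.coeff 1, p.coeff 2, p.coeff 3, p.coeff 4, q.coeff 0, q.coeff 1], ?_⟩
    obtain ⟨a0, a1, a2, a3, a4⟩ :=
      polA_coeff ![p.coeff 0, p.coeff 1, p.coeff 2, p.coeff 3, p.coeff 4, q.coeff 0, q.coeff 1]
    obtain ⟨b0, b1⟩ :=
      polB_coeff ![p.coeff 0, p.coeff 1, p.coeff 2, p.coeff 3, p.coeff 4, q.coeff 0, q.coeff 1]
    refine Prod.ext ?_ ?_
    · refine (Submodule.Quotient.eq _).mpr (Ideal.mem_span_singleton.mpr ?_)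
      rw [X_pow_dvd_iff]
      intro d hd
      rw [coeff_sub, sub_eq_zero]
      interval_cases d <;> assumption
    · refine (Submodule.Quotient.eq _).mpr (Ideal.mem_span_singleton.mpr ?_)
      rw [X_pow_dvd_iff]
      intro d hd
      rw [coeff_sub, sub_eq_zero]
      change d < 2 at hd
      interval_cases d <;> assumption

/-- `M_x` in coordinates -/
def Nmap {F : Type*} [Field F] (a1 a2 a3 a4 b1 g0 g1 h0 h1 : F) :
    (Fin 7 → F) →ₗ[F] (Fin 7 → F) where
  toFun c := ![0, a1 * c 0, a2 * c 0 + a1 * c 1, a3 * c 0 + a2 * c 1 + a1 * c 2 + g0 * c 5,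
    a4 * c 0 + a3 * c 1 + a2 * c 2 + a1 * c 3 + g1 * c 5 + g0 * c 6, h0 * c 0,
    h1 * c 0 + h0 * c 1 + b1 * c 5]
  map_add' c d := by
    ext i; fin_cases i <;> simp <;> ring
  map_smul' k c := by
    ext i; fin_cases i <;> simp <;> ring

/-- `Nmap` at the point `x` -/
def Nx {F : Type*} [Field F] (x : Vars 5 3 → F) : (Fin 7 → F) →ₗ[F] (Fin 7 → F) :=
  Nmap (x (Sum.inl ⟨0, by norm_num⟩)) (x (Sum.inl ⟨1, by norm_num⟩))
    (x (Sum.inl ⟨2, by norm_num⟩)) (x (Sum.inl ⟨3, by norm_num⟩))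
    (x (Sum.inr (Sum.inl ⟨0, by norm_num⟩)))
    (x (Sum.inr (Sum.inr (Sum.inl ⟨0, by norm_num⟩))))
    (x (Sum.inr (Sum.inr (Sum.inl ⟨1, by norm_num⟩))))
    (x (Sum.inr (Sum.inr (Sum.inr ⟨0, by norm_num⟩))))
    (x (Sum.inr (Sum.inr (Sum.inr ⟨1, by norm_num⟩))))

lemma aux1 {F : Type*} [Field F] (a1 a2 a3 a4 b1 g0 g1 h0 h1 : F) (c : Fin 7 → F) :
    (Submodule.Quotient.mk ((C a1 * X + C a2 * X ^ 2 + C a3 * X ^ 3 + C a4 * X ^ 4) * polA c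
      + (X ^ 3 * (C g0 + C g1 * X)) * polB c) : PQ F 5) =
      Submodule.Quotient.mk (polA (Nmap a1 a2 a3 a4 b1 g0 g1 h0 h1 c)) := by
  refine (Submodule.Quotient.eq _).mpr (Ideal.mem_span_singleton.mpr ?_)
  refine ⟨C a4 * C (c 1) + C a3 * C (c 2) + C a2 * C (c 3) + C a1 * C (c 4) + C g1 * C (c 6)
    + (C a4 * C (c 2) + C a3 * C (c 3) + C a2 * C (c 4)) * X
    + (C a4 * C (c 3) + C a3 * C (c 4)) * X ^ 2 + C a4 * C (c 4) * X ^ 3, ?_⟩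
  simp [polA, polB, Nmap]
  ring

lemma aux2 {F : Type*} [Field F] (a1 a2 a3 a4 b1 g0 g1 h0 h1 : F) (c : Fin 7 → F) :
    (Submodule.Quotient.mk ((C h0 + C h1 * X) * polA c + C b1 * X * polB c) : PQ F (5 - 3)) =
      Submodule.Quotient.mk (polB (Nmap a1 a2 a3 a4 b1 g0 g1 h0 h1 c)) := by
  refine (Submodule.Quotient.eq _).mpr (Ideal.mem_span_singleton.mpr ?_)
  refine ⟨C h0 * (C (c 2) + C (c 3) * X + C (c 4) * X ^ 2)
    + C h1 * (C (c 1) + C (c 2) * X + C (c 3) * X ^ 2 + C (c 4) * X ^ 3) + C b1 * C (c 6), ?_⟩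
  simp [polA, polB, Nmap]
  ring

lemma Mmap_piMap {F : Type*} [Field F] (a1 a2 a3 a4 b1 g0 g1 h0 h1 : F) (h : 3 ≤ 5)
    (c : Fin 7 → F) :
    Mmap F 5 3 h (C a1 * X + C a2 * X ^ 2 + C a3 * X ^ 3 + C a4 * X ^ 4) (C g0 + C g1 * X)
      (C h0 + C h1 * X) (C b1 * X) (piMap F c) =
      piMap F (Nmap a1 a2 a3 a4 b1 g0 g1 h0 h1 c) :=
  Prod.ext (aux1 a1 a2 a3 a4 b1 g0 g1 h0 h1 c) (aux2 a1 a2 a3 a4 b1 g0 g1 h0 h1 c)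

lemma Mx_piMap {F : Type*} [Field F] (x : Vars 5 3 → F) (h : 3 ≤ 5) (c : Fin 7 → F) :
    Mx F 5 3 h x (piMap F c) = piMap F (Nx x c) := by
  have ha : paOf F 5 3 x = C (x (Sum.inl ⟨0, by norm_num⟩)) * X
      + C (x (Sum.inl ⟨1, by norm_num⟩)) * X ^ 2 + C (x (Sum.inl ⟨2, by norm_num⟩)) * X ^ 3
      + C (x (Sum.inl ⟨3, by norm_num⟩)) * X ^ 4 := by
    change ∑ i : Fin 4, C (x (Sum.inl i)) * X ^ ((i : ℕ) + 1) = _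
    rw [Fin.sum_univ_four]
    simp only [Fin.val_zero, zero_add, pow_one]; rfl
  have hb : pbOf F 5 3 x = C (x (Sum.inr (Sum.inl ⟨0, by norm_num⟩))) * X := by
    change ∑ i : Fin 1, C (x (Sum.inr (Sum.inl i))) * X ^ ((i : ℕ) + 1) = _
    rw [Fin.sum_univ_one]
    simp only [Fin.val_zero, zero_add, pow_one]; rfl
  have hg : pgOf F 5 3 x = C (x (Sum.inr (Sum.inr (Sum.inl ⟨0, by norm_num⟩))))
      + C (x (Sum.inr (Sum.inr (Sum.inl ⟨1, by norm_num⟩)))) * X := by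
    change ∑ i : Fin 2, C (x (Sum.inr (Sum.inr (Sum.inl i)))) * X ^ (i : ℕ) = _
    rw [Fin.sum_univ_two]; simp
  have hh : phOf F 5 3 x = C (x (Sum.inr (Sum.inr (Sum.inr ⟨0, by norm_num⟩))))
      + C (x (Sum.inr (Sum.inr (Sum.inr ⟨1, by norm_num⟩)))) * X := by
    change ∑ i : Fin 2, C (x (Sum.inr (Sum.inr (Sum.inr i)))) * X ^ (i : ℕ) = _
    rw [Fin.sum_univ_two]; simp
  unfold Mx Nx
  rw [ha, hb, hg, hh]
  generalize x (Sum.inl ⟨0, by norm_num⟩) = a1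
  generalize x (Sum.inl ⟨1, by norm_num⟩) = a2
  generalize x (Sum.inl ⟨2, by norm_num⟩) = a3
  generalize x (Sum.inl ⟨3, by norm_num⟩) = a4
  generalize x (Sum.inr (Sum.inl ⟨0, by norm_num⟩)) = b1
  generalize x (Sum.inr (Sum.inr (Sum.inl ⟨0, by norm_num⟩))) = g0
  generalize x (Sum.inr (Sum.inr (Sum.inl ⟨1, by norm_num⟩))) = g1
  generalize x (Sum.inr (Sum.inr (Sum.inr ⟨0, by norm_num⟩))) = h0
  generalize x (Sum.inr (Sum.inr (Sum.inr ⟨1, by norm_num⟩))) = h1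
  exact Mmap_piMap a1 a2 a3 a4 b1 g0 g1 h0 h1 h c

lemma Mx_pow_piMap {F : Type*} [Field F] (x : Vars 5 3 → F) (h : 3 ≤ 5) (s : ℕ)
    (c : Fin 7 → F) :
    (Mx F 5 3 h x ^ s) (piMap F c) = piMap F (((Nx x : Module.End F (Fin 7 → F)) ^ s) c) := by
  induction s generalizing c with
  | zero => simp
  | succ s ih =>
    rw [pow_succ (Mx F 5 3 h x), pow_succ (Nx x : Module.End F (Fin 7 → F)),
      Module.End.mul_apply, Module.End.mul_apply, Mx_piMap, ih]

lemma finrank_ker_eq {F : Type*} [Field F] (x : Vars 5 3 → F) (h : 3 ≤ 5) (s : ℕ) :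
    Module.finrank F (LinearMap.ker (Mx F 5 3 h x ^ s)) =
      Module.finrank F (LinearMap.ker ((Nx x : Module.End F (Fin 7 → F)) ^ s)) := by
  let e := LinearEquiv.ofBijective (piMap F) (piMap_bij F)
  have : LinearMap.ker (Mx F 5 3 h x ^ s) =
      (LinearMap.ker ((Nx x : Module.End F (Fin 7 → F)) ^ s)).map (e : _ →ₗ[F] _) := by
    ext v
    obtain ⟨c, rfl⟩ := (piMap_bij F).2 v
    constructor
    · intro hv
      refine ⟨c, ?_, rfl⟩
      rw [LinearMap.mem_ker, Mx_pow_piMap] at hv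
      exact (piMap_bij F).1 (hv.trans (map_zero _).symm)
    · rintro ⟨d, hd, hdc⟩
      have : d = c := (piMap_bij F).1 hdc
      subst this
      rw [LinearMap.mem_ker, Mx_pow_piMap, LinearMap.mem_ker.mp hd, map_zero]
  rw [this]
  exact LinearEquiv.finrank_map_eq e _

lemma finrank_ker_surj {F : Type*} [Field F] {k : ℕ} (φ : (Fin 7 → F) →ₗ[F] (Fin k → F))
    (hφ : Function.Surjective φ) : Module.finrank F (LinearMap.ker φ) = 7 - k := by
  have h := φ.finrank_range_add_finrank_ker
  rw [LinearMap.range_eq_top.mpr hφ, finrank_top, Module.finrank_fin_fun,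
    Module.finrank_fin_fun] at h
  omega

lemma finrank_ker_func {F : Type*} [Field F] (φ : (Fin 7 → F) →ₗ[F] F) :
    6 ≤ Module.finrank F (LinearMap.ker φ) := by
  have h := φ.finrank_range_add_finrank_ker
  have h2 := Submodule.finrank_le (LinearMap.range φ)
  rw [Module.finrank_self] at h2
  rw [Module.finrank_fin_fun] at h
  omega

lemma Nmap_forward {F : Type*} [Field F] (a2 a3 a4 g0 g1 h0 h1 : F) (hg : g0 ≠ 0) (hh : h0 ≠ 0)
    (s : ℕ) :
    Module.finrank F (LinearMap.ker
      ((Nmap 0 a2 a3 a4 0 g0 g1 h0 h1 : Module.End F (Fin 7 → F)) ^ s)) =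
      (({3, 3, 1} : Multiset ℕ).map fun p => min p s).sum := by
  set N : Module.End F (Fin 7 → F) := Nmap 0 a2 a3 a4 0 g0 g1 h0 h1 with hN
  have hN3 : N ^ 3 = 0 := by
    ext1 i
    ext1
    ext j
    simp only [pow_succ, pow_zero, one_mul, Module.End.mul_apply, LinearMap.comp_apply]
    fin_cases j <;> simp [hN, Nmap]
  rcases s with _ | _ | _ | s
  · rw [pow_zero, Module.End.one_eq_id, LinearMap.ker_id]; simp
  · let φ : (Fin 7 → F) →ₗ[F] (Fin 4 → F) :=
      LinearMap.pi ![LinearMap.proj 0, LinearMap.proj 1, LinearMap.proj 5,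
        a2 • LinearMap.proj 2 + g0 • LinearMap.proj 6]
    have hk : LinearMap.ker (N ^ (0 + 1)) = LinearMap.ker φ := by
      ext c
      simp only [zero_add, pow_one, LinearMap.mem_ker, funext_iff, Fin.forall_fin_succ]
      simp [hN, Nmap, φ, hh]
      constructor
      · rintro ⟨p1, p2, p3, p4, p5⟩
        subst_vars
        simp_all
      · rintro ⟨p1, p2, p3, p4⟩
        simp_all
    rw [hk, finrank_ker_surj φ]
    · simp
    · intro y
      refine ⟨![y 0, y 1, 0, 0, 0, y 2, y 3 / g0], ?_⟩
      ext i
      fin_cases i <;> simp [φ, hg]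
      field_simp
  · let φ : (Fin 7 → F) →ₗ[F] (Fin 2 → F) := LinearMap.pi ![LinearMap.proj 0, LinearMap.proj 1]
    have hk : LinearMap.ker (N ^ (0 + 1 + 1)) = LinearMap.ker φ := by
      ext c
      simp only [zero_add, pow_succ, pow_zero, one_mul, Module.End.mul_apply,
        LinearMap.mem_ker, funext_iff, Fin.forall_fin_succ]
      simp [hN, Nmap, φ, hh, hg]
      grind
    rw [hk, finrank_ker_surj φ]
    · simp
    · intro y
      refine ⟨![y 0, y 1, 0, 0, 0, 0, 0], ?_⟩
      ext i
      fin_cases i <;> simp [φ]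
  · have : N ^ (s + 1 + 1 + 1) = 0 := by
      rw [show s + 1 + 1 + 1 = s + 3 from rfl, pow_add, hN3, mul_zero]
    rw [this, LinearMap.ker_zero, finrank_top, Module.finrank_fin_fun]
    simp

lemma Nmap_backward {F : Type*} [Field F] (a1 a2 a3 a4 b1 g0 g1 h0 h1 : F)
    (H2 : Module.finrank F (LinearMap.ker
      ((Nmap a1 a2 a3 a4 b1 g0 g1 h0 h1 : Module.End F (Fin 7 → F)) ^ 2)) = 5)
    (H3 : Module.finrank F (LinearMap.ker
      ((Nmap a1 a2 a3 a4 b1 g0 g1 h0 h1 : Module.End F (Fin 7 → F)) ^ 3)) = 7) :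
    a1 = 0 ∧ b1 = 0 := by
  have hz : (Nmap a1 a2 a3 a4 b1 g0 g1 h0 h1 : Module.End F (Fin 7 → F)) ^ 3 = 0 := by
    rw [← LinearMap.ker_eq_top]
    apply Submodule.eq_top_of_finrank_eq
    rw [H3, Module.finrank_fin_fun]
  have hv0 := LinearMap.congr_fun hz ![1, 0, 0, 0, 0, 0, 0]
  have e3 := congrFun hv0 3
  have ha : a1 = 0 := by
    simp [pow_succ, Nmap] at e3
    exact e3
  subst ha
  have e4 := congrFun hv0 4
  simp [pow_succ, Nmap] at e4
  refine ⟨rfl, ?_⟩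
  by_contra hb
  have hgh : g0 = 0 ∨ h0 = 0 := by
    simpa [hb] using e4
  rcases hgh with rfl | rfl
  · have hle : LinearMap.ker (LinearMap.proj 0 : (Fin 7 → F) →ₗ[F] F) ≤ LinearMap.ker
        ((Nmap 0 a2 a3 a4 b1 0 g1 h0 h1 : Module.End F (Fin 7 → F)) ^ 2) := by
      intro c hc
      have hc : c 0 = 0 := hc
      rw [LinearMap.mem_ker]
      ext j
      fin_cases j <;> simp [pow_succ, Nmap, hc]
    have := Submodule.finrank_mono hle
    have := finrank_ker_func (LinearMap.proj 0 : (Fin 7 → F) →ₗ[F] F)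
    omega
  · let φ : (Fin 7 → F) →ₗ[F] F :=
      (a2 * a2 + g0 * h1) • LinearMap.proj 0 + (g0 * b1) • LinearMap.proj 5
    have hle : LinearMap.ker φ ≤ LinearMap.ker
        ((Nmap 0 a2 a3 a4 b1 g0 g1 0 h1 : Module.End F (Fin 7 → F)) ^ 2) := by
      intro c hc
      have hc : (a2 * a2 + g0 * h1) * c 0 + (g0 * b1) * c 5 = 0 := hc
      rw [LinearMap.mem_ker]
      ext j
      fin_cases j <;> simp [pow_succ, Nmap]
      linear_combination hc
    have := Submodule.finrank_mono hle
    have := finrank_ker_func φ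
    omega

end Helpers

/-- For `Q = (5,2)` (so `u = 5`, `r = 3`, `N = 9`), the Zariski closure
of the locus of points `x` with Jordan type of `M_x` equal to `(3,3,1)` is exactly
`{a_1 = 0, b_1 = 0}`. -/
theorem statement17 (F : Type*) [Field F] [Infinite F] :
    zClosure F 5 3
        {x | JordanTypeIs F (Mx F 5 3 (by norm_num) x) ({3, 3, 1} : Multiset ℕ)} =
      {x : Vars 5 3 → F |
        x (Sum.inl ⟨0, by norm_num⟩) = 0 ∧ x (Sum.inr (Sum.inl ⟨0, by norm_num⟩)) = 0} := by
  apply Set.Subset.antisymm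
  · apply Set.sInter_subset_of_mem
    refine ⟨⟨{MvPolynomial.X (Sum.inl ⟨0, by norm_num⟩),
      MvPolynomial.X (Sum.inr (Sum.inl ⟨0, by norm_num⟩))}, ?_⟩, ?_⟩
    · ext x
      simp [zLocus]
    · intro x hx
      have H2 := hx 2
      have H3 := hx 3
      rw [finrank_ker_eq] at H2 H3
      have HH2 : Module.finrank F (LinearMap.ker ((Nx x : Module.End F (Fin 7 → F)) ^ 2)) = 5 := by
        simpa using H2
      have HH3 : Module.finrank F (LinearMap.ker ((Nx x : Module.End F (Fin 7 → F)) ^ 3)) = 7 := by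
        simpa using H3
      exact Nmap_backward _ _ _ _ _ _ _ _ _ HH2 HH3
  · rintro x ⟨ha, hb⟩ S ⟨⟨T, rfl⟩, hS⟩ p hp
    let ig : Vars 5 3 := Sum.inr (Sum.inr (Sum.inl ⟨0, by norm_num⟩))
    let ih : Vars 5 3 := Sum.inr (Sum.inr (Sum.inr ⟨0, by norm_num⟩))
    let y : Vars 5 3 → F[X] := fun i => if i = ig ∨ i = ih then C (x i) + X else C (x i)
    let q : F[X] := MvPolynomial.aeval y p
    have hq : ∀ s : F, q.eval s = MvPolynomial.eval (fun i => (y i).eval s) p := by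
      intro s
      have := MvPolynomial.eval₂_comp_left (Polynomial.evalRingHom s) (C : F →+* F[X]) y p
      change Polynomial.evalRingHom s (MvPolynomial.eval₂ C y p) = _
      rw [this]
      have h1 : (Polynomial.evalRingHom s).comp (C : F →+* F[X]) = RingHom.id F := by
        ext; simp
      rw [h1]
      rfl
    have hprod : q * ((C (x ig) + X) * (C (x ih) + X)) = 0 := by
      apply Polynomial.funext
      intro s
      rw [eval_mul, eval_mul, eval_zero]
      by_cases h1 : eval s (C (x ig) + X) = 0
      · rw [h1]; ring
      by_cases h2 : eval s (C (x ih) + X) = 0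
      · rw [h2]; ring
      have hmem : (fun i => (y i).eval s) ∈
          {x | JordanTypeIs F (Mx F 5 3 (by norm_num) x) ({3, 3, 1} : Multiset ℕ)} := by
        intro k
        rw [finrank_ker_eq]
        have e1 : (y (Sum.inl ⟨0, by norm_num⟩)).eval s = 0 := by
          simp [y, ig, ih]; exact ha
        have e2 : (y (Sum.inr (Sum.inl ⟨0, by norm_num⟩))).eval s = 0 := by
          simp [y, ig, ih]; exact hb
        have e3 : (y ig).eval s ≠ 0 := by
          simpa [y] using h1
        have e4 : (y ih).eval s ≠ 0 := by
          simpa [y] using h2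
        unfold Nx
        beta_reduce
        rw [e1, e2]
        exact Nmap_forward _ _ _ _ _ _ _ e3 e4 k
      rw [hq, hS hmem p hp, zero_mul]
    have hne : ∀ z : F, C z + X ≠ (0 : F[X]) := fun z => by
      rw [add_comm]; exact X_add_C_ne_zero z
    have hq0 : q = 0 := by
      rcases mul_eq_zero.mp hprod with h | h
      · exact h
      · exact absurd h (mul_ne_zero (hne _) (hne _))
    have h0 := hq 0
    rw [hq0, eval_zero] at h0
    have hy : (fun i => (y i).eval 0) = x := by
      funext i
      by_cases hi : i = ig ∨ i = ih <;> simp [y, hi]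
    rw [hy] at h0
    exact h0.symm
end

section
/- Let F be an infinite field and let Q = (5,2), so u = 5, r = 3 and N = 9 with coordinates x = (a_1, a_2, a_3, a_4, b_1, g_0, g_1, h_0, h_1) ∈ F^9. Let Z be the Zariski closure in F^9 of the set { x ∈ F^9 : the Jordan type of M_x equals (3,2,1,1) }. Then the set { x ∈ F^9 : a_1 = 0, b_1 = 0 and g_0 h_0 = 0 } is strictly contained in Z, and Z is not irreducible: it has at least three irreducible components. -/
open Polynomial

/-- An irreducible Zariski-closed subset of `F^N`: nonempty, closed, and not the union
of two proper closed subsets. -/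
def IsZIrred (F : Type*) [Field F] (u r : ℕ) (S : Set (Vars u r → F)) : Prop :=
  IsZClosed F u r S ∧ S.Nonempty ∧
    ∀ C₁ C₂ : Set (Vars u r → F), IsZClosed F u r C₁ → IsZClosed F u r C₂ →
      S = C₁ ∪ C₂ → S = C₁ ∨ S = C₂

/-- An irreducible component of `Z`: a maximal irreducible closed subset of `Z`. -/
def IsZComponent (F : Type*) [Field F] (u r : ℕ) (Z C : Set (Vars u r → F)) : Prop :=
  IsZIrred F u r C ∧ C ⊆ Z ∧
    ∀ C' : Set (Vars u r → F), IsZIrred F u r C' → C ⊆ C' → C' ⊆ Z → C = C'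

/-! ### Zariski topology helpers -/

section ZariskiHelpers

open MvPolynomial in
/-- The coordinate subspace on which the coordinates in `I` vanish. -/
def coordSub (F : Type*) [Field F] (u r : ℕ) (I : Set (Vars u r)) : Set (Vars u r → F) :=
  {x | ∀ i ∈ I, x i = 0}

lemma coordSub_closed (F : Type*) [Field F] (u r : ℕ) (I : Set (Vars u r)) :
    IsZClosed F u r (coordSub F u r I) := by
  refine ⟨{p | ∃ i ∈ I, p = MvPolynomial.X i}, ?_⟩
  ext x
  constructor
  · rintro hx p ⟨i, hi, rfl⟩
    simpa using hx i hi
  · intro hx i hi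
    simpa using hx (MvPolynomial.X i) ⟨i, hi, rfl⟩

lemma coordSub_prime (F : Type*) [Field F] [Infinite F] (u r : ℕ) (I : Set (Vars u r))
    (p q : MvPolynomial (Vars u r) F)
    (h : ∀ x ∈ coordSub F u r I, MvPolynomial.eval x p * MvPolynomial.eval x q = 0) :
    (∀ x ∈ coordSub F u r I, MvPolynomial.eval x p = 0) ∨
      (∀ x ∈ coordSub F u r I, MvPolynomial.eval x q = 0) := by
  classical
  let s : Vars u r → MvPolynomial (Vars u r) F := fun i => if i ∈ I then 0 else MvPolynomial.X i
  let π : (Vars u r → F) → (Vars u r → F) := fun x i => if i ∈ I then 0 else x i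
  have hs : ∀ x (f : MvPolynomial (Vars u r) F),
      MvPolynomial.eval x (MvPolynomial.bind₁ s f) = MvPolynomial.eval (π x) f := by
    intro x f
    have := MvPolynomial.eval₂Hom_bind₁ (RingHom.id F) x s f
    change MvPolynomial.eval₂Hom (RingHom.id F) x _ = _
    rw [this]
    change _ = MvPolynomial.eval₂Hom (RingHom.id F) (π x) f
    congr 2
    funext i
    by_cases hi : i ∈ I <;> simp [s, π, hi]
  have hπ : ∀ x, π x ∈ coordSub F u r I := by
    intro x i hi
    simp [π, hi]
  have hπ' : ∀ x ∈ coordSub F u r I, π x = x := by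
    intro x hx
    funext i
    by_cases hi : i ∈ I
    · simp [π, hi, hx i hi]
    · simp [π, hi]
  have h0 : MvPolynomial.bind₁ s p * MvPolynomial.bind₁ s q = 0 := by
    apply MvPolynomial.funext
    intro x
    rw [map_mul, hs, hs, map_zero]
    exact h _ (hπ x)
  rcases mul_eq_zero.mp h0 with h1 | h1
  · left
    intro x hx
    rw [← hπ' x hx, ← hs, h1, map_zero]
  · right
    intro x hx
    rw [← hπ' x hx, ← hs, h1, map_zero]

lemma coordSub_irred (F : Type*) [Field F] [Infinite F] (u r : ℕ) (I : Set (Vars u r)) :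
    IsZIrred F u r (coordSub F u r I) := by
  refine ⟨coordSub_closed F u r I, ⟨0, fun i _ => rfl⟩, ?_⟩
  rintro C₁ C₂ ⟨T₁, rfl⟩ ⟨T₂, rfl⟩ h
  by_contra hcon
  push Not at hcon
  obtain ⟨h1, h2⟩ := hcon
  have key : ∀ T, zLocus F u r T ⊆ coordSub F u r I → coordSub F u r I ≠ zLocus F u r T →
      ∃ p ∈ T, ¬ ∀ x ∈ coordSub F u r I, MvPolynomial.eval x p = 0 := by
    intro T hT hne
    by_contra hc
    push Not at hc
    exact hne (Set.Subset.antisymm (fun x hx p hp => hc p hp x hx) hT)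
  obtain ⟨p, hp, hp'⟩ := key T₁ (h ▸ Set.subset_union_left) h1
  obtain ⟨q, hq, hq'⟩ := key T₂ (h ▸ Set.subset_union_right) h2
  rcases coordSub_prime F u r I p q (by
    intro x hx
    rw [h] at hx
    rcases hx with hx | hx
    · rw [hx p hp, zero_mul]
    · rw [hx q hq, mul_zero]) with h3 | h3
  · exact hp' h3
  · exact hq' h3

lemma coordSub_dense (F : Type*) [Field F] [Infinite F] (u r : ℕ) (I : Set (Vars u r))
    (S : Set (Vars u r → F)) (f : MvPolynomial (Vars u r) F) (x₀ : Vars u r → F)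
    (hx₀ : x₀ ∈ coordSub F u r I) (hf : MvPolynomial.eval x₀ f ≠ 0)
    (hS : ∀ x ∈ coordSub F u r I, MvPolynomial.eval x f ≠ 0 → x ∈ S) :
    coordSub F u r I ⊆ zClosure F u r S := by
  rintro x hx C ⟨⟨T, rfl⟩, hSC⟩ p hp
  rcases coordSub_prime F u r I p f (by
    intro y hy
    by_cases hfy : MvPolynomial.eval y f = 0
    · rw [hfy, mul_zero]
    · rw [hSC (hS y hy hfy) p hp, zero_mul]) with h | h
  · exact h x hx
  · exact absurd (h _ hx₀) hf

lemma irred_prime (F : Type*) [Field F] (u r : ℕ) (C : Set (Vars u r → F))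
    (hC : IsZIrred F u r C) (i j : Vars u r) (h : ∀ x ∈ C, x i * x j = 0) :
    (∀ x ∈ C, x i = 0) ∨ (∀ x ∈ C, x j = 0) := by
  obtain ⟨⟨T, rfl⟩, -, hirr⟩ := hC
  have hcl : ∀ k : Vars u r, IsZClosed F u r (zLocus F u r T ∩ {x | x k = 0}) := by
    intro k
    refine ⟨insert (MvPolynomial.X k) T, ?_⟩
    ext x
    simp [zLocus, and_comm]
  rcases hirr _ _ (hcl i) (hcl j) (by
    ext x
    constructor
    · intro hx
      rcases mul_eq_zero.mp (h x hx) with h1 | h1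
      · exact Or.inl ⟨hx, h1⟩
      · exact Or.inr ⟨hx, h1⟩
    · rintro (hx | hx) <;> exact hx.1) with h1 | h1
  · left
    intro x hx
    rw [h1] at hx
    exact hx.2
  · right
    intro x hx
    rw [h1] at hx
    exact hx.2

lemma comp_of (F : Type*) [Field F] [Infinite F] (u r : ℕ) (k i i' j j' : Vars u r)
    (h1 : i' ≠ k) (h2 : i' ≠ i) (h3 : i' ≠ j) (h4 : j' ≠ k) (h5 : j' ≠ i) (h6 : j' ≠ j)
    (Z : Set (Vars u r → F))
    (hZ : ∀ x, x ∈ Z ↔ x k = 0 ∧ x i * x i' = 0 ∧ x j * x j' = 0) :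
    IsZComponent F u r Z (coordSub F u r {k, i, j}) := by
  classical
  have hpt : ∀ l : Vars u r, l ≠ k → l ≠ i → l ≠ j →
      (Pi.single l 1 : Vars u r → F) ∈ coordSub F u r {k, i, j} := by
    rintro l hk hi hj m (rfl | rfl | rfl)
    · exact Pi.single_eq_of_ne hk.symm _
    · exact Pi.single_eq_of_ne hi.symm _
    · exact Pi.single_eq_of_ne hj.symm _
  refine ⟨coordSub_irred F u r _, ?_, ?_⟩
  · intro x hx
    rw [hZ, hx k (by simp), hx i (by simp), hx j (by simp)]
    simp
  · intro C' hC' hsub hCZ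
    refine Set.Subset.antisymm hsub ?_
    have hi : ∀ x ∈ C', x i = 0 := by
      rcases irred_prime F u r C' hC' i i' (fun x hx => ((hZ x).mp (hCZ hx)).2.1) with h | h
      · exact h
      · exact absurd (h _ (hsub (hpt i' h1 h2 h3))) (by simp)
    have hj : ∀ x ∈ C', x j = 0 := by
      rcases irred_prime F u r C' hC' j j' (fun x hx => ((hZ x).mp (hCZ hx)).2.2) with h | h
      · exact h
      · exact absurd (h _ (hsub (hpt j' h4 h5 h6))) (by simp)
    rintro x hx m (rfl | rfl | rfl)
    · exact ((hZ x).mp (hCZ hx)).1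
    · exact hi x hx
    · exact hj x hx

end ZariskiHelpers

/-! ### The model of `M_x` on `F^7` -/

section Model

/-- The linear map `F^m → F[t]/(t^m)` given by coefficients. -/
noncomputable def coefMap (F : Type*) [Field F] (m : ℕ) : (Fin m → F) →ₗ[F] PQ F m where
  toFun c := Ideal.Quotient.mk _ (∑ i : Fin m, C (c i) * X ^ (i : ℕ))
  map_add' c d := by
    rw [← map_add]
    congr 1
    simp [add_mul, Finset.sum_add_distrib]
  map_smul' a c := by
    rw [RingHom.id_apply, ← Ideal.Quotient.mkₐ_eq_mk F, ← map_smul]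
    congr 1
    simp [Finset.smul_sum, smul_eq_C_mul, mul_assoc]

lemma coefMap_coeff (F : Type*) [Field F] (m : ℕ) (c : Fin m → F) (k : ℕ) (hk : k < m) :
    (∑ i : Fin m, C (c i) * X ^ (i : ℕ) : F[X]).coeff k = c ⟨k, hk⟩ := by
  rw [finsetSum_coeff, Finset.sum_eq_single ⟨k, hk⟩]
  · simp
  · intro b _ hb
    have : k ≠ (b : ℕ) := fun h => hb (Fin.ext h.symm)
    simp [coeff_X_pow, this]
  · simp

lemma coefMap_bij (F : Type*) [Field F] (m : ℕ) : Function.Bijective (coefMap F m) := by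
  constructor
  · rw [injective_iff_map_eq_zero]
    intro c hc
    have h1 : (∑ i : Fin m, C (c i) * X ^ (i : ℕ) : F[X]) ∈ Ideal.span {(X : F[X]) ^ m} :=
      Ideal.Quotient.eq_zero_iff_mem.mp hc
    rw [Ideal.mem_span_singleton, X_pow_dvd_iff] at h1
    funext i
    have := h1 i i.2
    rwa [coefMap_coeff F m c i i.2] at this
  · intro y
    obtain ⟨p, rfl⟩ := Ideal.Quotient.mk_surjective y
    refine ⟨fun i => p.coeff i, ?_⟩
    apply Ideal.Quotient.eq.mpr
    rw [Ideal.mem_span_singleton, X_pow_dvd_iff]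
    intro d hd
    rw [coeff_sub, coefMap_coeff F m _ d hd, sub_self]

/-- The matrix model of `M_x`. -/
def Lmod (F : Type*) [Field F] (a1 a2 a3 a4 b1 g0 g1 h0 h1 : F) :
    ((Fin 5 → F) × (Fin 2 → F)) →ₗ[F] ((Fin 5 → F) × (Fin 2 → F)) where
  toFun v := (![0, a1 * v.1 0, a2 * v.1 0 + a1 * v.1 1,
      a3 * v.1 0 + a2 * v.1 1 + a1 * v.1 2 + g0 * v.2 0,
      a4 * v.1 0 + a3 * v.1 1 + a2 * v.1 2 + a1 * v.1 3 + g1 * v.2 0 + g0 * v.2 1],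
    ![h0 * v.1 0, h1 * v.1 0 + h0 * v.1 1 + b1 * v.2 0])
  map_add' v w := by
    ext i <;> fin_cases i <;> simp <;> ring
  map_smul' c v := by
    ext i <;> fin_cases i <;> simp <;> ring

/-- The model attached to a point. -/
def Lx (F : Type*) [Field F] (x : Vars 5 3 → F) :=
  Lmod F (x (Sum.inl 0)) (x (Sum.inl 1)) (x (Sum.inl 2)) (x (Sum.inl 3))
    (x (Sum.inr (Sum.inl 0))) (x (Sum.inr (Sum.inr (Sum.inl 0))))
    (x (Sum.inr (Sum.inr (Sum.inl 1)))) (x (Sum.inr (Sum.inr (Sum.inr 0))))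
    (x (Sum.inr (Sum.inr (Sum.inr 1))))

/-- Coordinates on `V`. -/
noncomputable def Phi (F : Type*) [Field F] : ((Fin 5 → F) × (Fin 2 → F)) ≃ₗ[F] (PQ F 5 × PQ F (5 - 3)) :=
  LinearEquiv.prodCongr (LinearEquiv.ofBijective (coefMap F 5) (coefMap_bij F 5))
    (LinearEquiv.ofBijective (coefMap F 2) (coefMap_bij F 2))

lemma Phi_comm (F : Type*) [Field F] (x : Vars 5 3 → F) (v : (Fin 5 → F) × (Fin 2 → F)) :
    Mx F 5 3 (by norm_num) x (Phi F v) = Phi F (Lx F x v) := by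
  obtain ⟨c, d⟩ := v
  apply Prod.ext
  · change Ideal.Quotient.mk (Ideal.span {(X : F[X]) ^ 5})
        (paOf F 5 3 x * ∑ i : Fin 5, C (c i) * X ^ (i : ℕ)) +
      Ideal.Quotient.mk (Ideal.span {(X : F[X]) ^ 5})
        (X ^ 3 * pgOf F 5 3 x * ∑ i : Fin 2, C (d i) * X ^ (i : ℕ)) =
      Ideal.Quotient.mk (Ideal.span {(X : F[X]) ^ 5})
        (∑ i : Fin 5, C ((Lx F x (c, d)).1 i) * X ^ (i : ℕ))
    rw [← map_add]
    apply Ideal.Quotient.eq.mpr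
    rw [Ideal.mem_span_singleton, X_pow_dvd_iff]
    intro k hk
    rw [coeff_sub, coefMap_coeff F 5 _ k hk]
    simp only [paOf, pgOf, Lx, Lmod]
    interval_cases k <;>
      simp [Fin.sum_univ_succ, coeff_mul, Finset.Nat.antidiagonal_succ, coeff_X_pow, coeff_X,
        coeff_C] <;> ring
  · change Ideal.Quotient.mk (Ideal.span {(X : F[X]) ^ 2})
        (phOf F 5 3 x * ∑ i : Fin 5, C (c i) * X ^ (i : ℕ)) +
      Ideal.Quotient.mk (Ideal.span {(X : F[X]) ^ 2})
        (pbOf F 5 3 x * ∑ i : Fin 2, C (d i) * X ^ (i : ℕ)) =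
      Ideal.Quotient.mk (Ideal.span {(X : F[X]) ^ 2})
        (∑ i : Fin 2, C ((Lx F x (c, d)).2 i) * X ^ (i : ℕ))
    rw [← map_add]
    apply Ideal.Quotient.eq.mpr
    rw [Ideal.mem_span_singleton, X_pow_dvd_iff]
    intro k hk
    rw [coeff_sub, coefMap_coeff F 2 _ k hk]
    simp only [phOf, pbOf, Lx, Lmod]
    interval_cases k <;>
      simp [Fin.sum_univ_succ, coeff_mul, Finset.Nat.antidiagonal_succ, coeff_X_pow, coeff_X,
        coeff_C] <;> ring

lemma finrank_ker_pow (F : Type*) [Field F] (x : Vars 5 3 → F) (s : ℕ) :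
    Module.finrank F (LinearMap.ker ((Mx F 5 3 (by norm_num) x) ^ s)) =
      Module.finrank F (LinearMap.ker ((Lx F x : Module.End F _) ^ s)) := by
  have hc : ∀ (s : ℕ) v, ((Mx F 5 3 (by norm_num) x) ^ s) (Phi F v) =
      Phi F (((Lx F x : Module.End F _) ^ s) v) := by
    intro s
    induction s with
    | zero => intro v; simp
    | succ n ih =>
      intro v
      rw [pow_succ (Mx F 5 3 _ x), pow_succ (Lx F x : Module.End F _), Module.End.mul_apply,
        Module.End.mul_apply, Phi_comm, ih]
  have : LinearMap.ker ((Mx F 5 3 (by norm_num) x) ^ s) =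
      (LinearMap.ker ((Lx F x : Module.End F _) ^ s)).map (Phi F).toLinearMap := by
    ext y
    obtain ⟨v, rfl⟩ := (Phi F).surjective y
    simp only [LinearMap.mem_ker, Submodule.mem_map, LinearEquiv.coe_coe, hc,
      EmbeddingLike.map_eq_zero_iff, EmbeddingLike.apply_eq_iff_eq, exists_eq_right]
  rw [this]
  exact LinearEquiv.finrank_map_eq (Phi F) _

lemma finrank_ker_of_surj (F : Type*) [Field F] (k : ℕ)
    (φ : ((Fin 5 → F) × (Fin 2 → F)) →ₗ[F] (Fin k → F)) (hφ : Function.Surjective φ) :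
    Module.finrank F (LinearMap.ker φ) + k = 7 := by
  have h := LinearMap.finrank_range_add_finrank_ker φ
  rw [LinearMap.range_eq_top.mpr hφ, finrank_top] at h
  simp at h
  omega

end Model

section Jordan

/-- Selection of coordinates. -/
def selMap (F : Type*) [Field F] {k : ℕ} (σ : Fin k → Fin 5 ⊕ Fin 2) :
    ((Fin 5 → F) × (Fin 2 → F)) →ₗ[F] (Fin k → F) where
  toFun v i := Sum.elim v.1 v.2 (σ i)
  map_add' v w := by
    funext i
    rcases h : σ i with j | j <;> simp [h]
  map_smul' c v := by
    funext i
    rcases h : σ i with j | j <;> simp [h]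

lemma jt_of (F : Type*) [Field F] (L : Module.End F ((Fin 5 → F) × (Fin 2 → F)))
    (σ : Fin 3 → Fin 5 ⊕ Fin 2) (τ : Fin 1 → Fin 5 ⊕ Fin 2)
    (s1 : ∀ y : Fin 3 → F, ∃ v, selMap F σ (L v) = y)
    (s2 : ∀ y : Fin 1 → F, ∃ v, selMap F τ (L (L v)) = y)
    (k1 : ∀ v, selMap F σ (L v) = 0 → L v = 0)
    (k2 : ∀ v, selMap F τ (L (L v)) = 0 → L (L v) = 0)
    (k3 : ∀ v, L (L (L v)) = 0) (s : ℕ) :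
    Module.finrank F (LinearMap.ker (L ^ s)) =
      (({3, 2, 1, 1} : Multiset ℕ).map fun p => min p s).sum := by
  have h3 : L ^ 3 = 0 := by
    apply LinearMap.ext
    intro v
    simp [pow_succ, k3]
  match s with
  | 0 => simp [Module.End.one_eq_id]
  | 1 =>
    have h := finrank_ker_of_surj F 3 (selMap F σ ∘ₗ L) s1
    have e : LinearMap.ker (selMap F σ ∘ₗ L) = LinearMap.ker (L ^ 1) := by
      ext v
      rw [pow_one, LinearMap.mem_ker, LinearMap.mem_ker, LinearMap.comp_apply]
      exact ⟨k1 v, fun h => by rw [h, map_zero]⟩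
    rw [e] at h
    simp
    omega
  | 2 =>
    have h := finrank_ker_of_surj F 1 (selMap F τ ∘ₗ (L * L)) s2
    have e : LinearMap.ker (selMap F τ ∘ₗ (L * L)) = LinearMap.ker (L ^ 2) := by
      ext v
      rw [pow_two, LinearMap.mem_ker, LinearMap.mem_ker, LinearMap.comp_apply]
      exact ⟨k2 v, fun h => by rw [h, map_zero]⟩
    rw [e] at h
    simp
    omega
  | n + 3 =>
    rw [pow_add, h3, mul_zero, LinearMap.ker_zero, finrank_top]
    simp

lemma ker_bound (F : Type*) [Field F] (L : Module.End F ((Fin 5 → F) × (Fin 2 → F))) (k : ℕ)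
    (σ : Fin k → Fin 5 ⊕ Fin 2) (s : ∀ y : Fin k → F, ∃ v, selMap F σ (L v) = y) :
    Module.finrank F (LinearMap.ker L) + k ≤ 7 := by
  have h := finrank_ker_of_surj F k (selMap F σ ∘ₗ L) s
  have : LinearMap.ker L ≤ LinearMap.ker (selMap F σ ∘ₗ L) := LinearMap.ker_le_ker_comp _ _
  have := Submodule.finrank_mono this
  omega

lemma jt_forward (F : Type*) [Field F] (a1 a2 a3 a4 b1 g0 g1 h0 h1 : F)
    (L : Module.End F ((Fin 5 → F) × (Fin 2 → F)))
    (hL : L = Lmod F a1 a2 a3 a4 b1 g0 g1 h0 h1)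
    (h : ∀ s : ℕ, Module.finrank F (LinearMap.ker (L ^ s)) =
      (({3, 2, 1, 1} : Multiset ℕ).map fun p => min p s).sum) :
    a1 = 0 ∧ g0 * h0 = 0 ∧ a2 * b1 = 0 := by
  have ha : a1 = 0 := by
    have h3 := h 3
    simp at h3
    have ht : LinearMap.ker (L ^ 3) = ⊤ := by
      apply Submodule.eq_top_of_finrank_eq
      rw [h3]; simp
    have hv : (![1, 0, 0, 0, 0], ![0, 0]) ∈ LinearMap.ker (L ^ 3) := by rw [ht]; trivial
    rw [LinearMap.mem_ker] at hv
    have := congrFun (congrArg Prod.fst hv) 3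
    simpa [pow_succ, hL, Lmod] using this
  subst ha
  have hp : g0 * h0 = 0 := by
    by_contra hne
    have hg : g0 ≠ 0 := left_ne_zero_of_mul hne
    have hh : h0 ≠ 0 := right_ne_zero_of_mul hne
    have h2 := h 2
    simp at h2
    have hb := ker_bound F (L ^ 2) 2 ![Sum.inl 3, Sum.inl 4] (by
      intro y
      refine ⟨(![y 0 / (g0 * h0),
        (y 1 - (a2 ^ 2 + g0 * h1 + g1 * h0) * (y 0 / (g0 * h0))) / (g0 * h0), 0, 0, 0],
        ![0, 0]), ?_⟩
      funext i
      fin_cases i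
      · simp [pow_succ, hL, Lmod, selMap]
        field_simp
      · simp [pow_succ, hL, Lmod, selMap]
        field_simp
        ring)
    omega
  refine ⟨rfl, hp, ?_⟩
  by_contra hne
  have ha2 : a2 ≠ 0 := left_ne_zero_of_mul hne
  have hb1 : b1 ≠ 0 := right_ne_zero_of_mul hne
  have h1' := h 1
  rw [pow_one] at h1'
  simp at h1'
  have hb := ker_bound F L 4 ![Sum.inl 2, Sum.inl 3, Sum.inl 4, Sum.inr 1] (by
    intro y
    obtain ⟨c0, hc0⟩ : ∃ c0, a2 * c0 = y 0 := ⟨y 0 / a2, by field_simp⟩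
    obtain ⟨c1, d0, hc1, hd0⟩ : ∃ c1 d0, a2 * c1 + g0 * d0 = y 1 - a3 * c0 ∧
        h0 * c1 + b1 * d0 = y 3 - h1 * c0 := by
      generalize y 1 - a3 * c0 = p
      generalize y 3 - h1 * c0 = q
      refine ⟨(b1 * p - g0 * q) / (a2 * b1), (a2 * q - h0 * p) / (a2 * b1), ?_, ?_⟩
      · field_simp
        linear_combination (-p) * hp
      · field_simp
        linear_combination (-q) * hp
    obtain ⟨c2, hc2⟩ : ∃ c2, a2 * c2 = y 2 - a4 * c0 - a3 * c1 - g1 * d0 :=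
      ⟨(y 2 - a4 * c0 - a3 * c1 - g1 * d0) / a2, by field_simp⟩
    refine ⟨(![c0, c1, c2, 0, 0], ![d0, 0]), ?_⟩
    funext i
    fin_cases i
    · simp [hL, Lmod, selMap]
      linear_combination hc0
    · simp [hL, Lmod, selMap]
      linear_combination hc1
    · simp [hL, Lmod, selMap]
      linear_combination hc2
    · simp [hL, Lmod, selMap]
      linear_combination hd0)
  omega

lemma vec_zero (F : Type*) [Field F] (a b c d e p q : F) (ha : a = 0) (hb : b = 0) (hc : c = 0)
    (hd : d = 0) (he : e = 0) (hp : p = 0) (hq : q = 0) :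
    ((![a, b, c, d, e], ![p, q]) : (Fin 5 → F) × (Fin 2 → F)) = 0 := by
  subst_vars
  ext i <;> fin_cases i <;> rfl

lemma jt_Cg (F : Type*) [Field F] (a2 a3 a4 g0 g1 h1 : F) (n1 : a2 ≠ 0)
    (n3 : a2 ^ 2 + g0 * h1 ≠ 0) (s : ℕ) :
    Module.finrank F (LinearMap.ker
      ((Lmod F 0 a2 a3 a4 0 g0 g1 0 h1 : Module.End F _) ^ s)) =
      (({3, 2, 1, 1} : Multiset ℕ).map fun p => min p s).sum := by
  apply jt_of F _ ![Sum.inl 2, Sum.inl 3, Sum.inl 4] ![Sum.inl 4]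
  · intro y
    obtain ⟨c0, hc0⟩ : ∃ c0, a2 * c0 = y 0 := ⟨y 0 / a2, by field_simp⟩
    obtain ⟨c1, hc1⟩ : ∃ c1, a2 * c1 = y 1 - a3 * c0 := ⟨(y 1 - a3 * c0) / a2, by field_simp⟩
    obtain ⟨c2, hc2⟩ : ∃ c2, a2 * c2 = y 2 - a4 * c0 - a3 * c1 :=
      ⟨(y 2 - a4 * c0 - a3 * c1) / a2, by field_simp⟩
    refine ⟨(![c0, c1, c2, 0, 0], ![0, 0]), ?_⟩
    funext i
    fin_cases i
    · simp [Lmod, selMap]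
      linear_combination hc0
    · simp [Lmod, selMap]
      linear_combination hc1
    · simp [Lmod, selMap]
      linear_combination hc2
  · intro y
    refine ⟨(![y 0 / (a2 ^ 2 + g0 * h1), 0, 0, 0, 0], ![0, 0]), ?_⟩
    funext i
    fin_cases i
    simp [Lmod, selMap]
    field_simp
  · intro v hv
    have e0 := congrFun hv 0
    have e1 := congrFun hv 1
    have e2 := congrFun hv 2
    simp [Lmod, selMap, n1] at e0 e1 e2
    simp [e0] at e1 e2
    apply vec_zero <;> simp [e0, e1, e2]
  · intro v hv
    have e0 := congrFun hv 0
    simp [Lmod, selMap] at e0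
    apply vec_zero <;> simp [Lmod]
    linear_combination e0
  · intro v
    apply vec_zero <;> simp [Lmod]

lemma jt_Ch (F : Type*) [Field F] (a2 a3 a4 g1 h0 h1 : F) (n1 : a2 ≠ 0)
    (n3 : a2 ^ 2 + g1 * h0 ≠ 0) (s : ℕ) :
    Module.finrank F (LinearMap.ker
      ((Lmod F 0 a2 a3 a4 0 0 g1 h0 h1 : Module.End F _) ^ s)) =
      (({3, 2, 1, 1} : Multiset ℕ).map fun p => min p s).sum := by
  apply jt_of F _ ![Sum.inl 2, Sum.inl 3, Sum.inl 4] ![Sum.inl 4]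
  · intro y
    obtain ⟨c0, hc0⟩ : ∃ c0, a2 * c0 = y 0 := ⟨y 0 / a2, by field_simp⟩
    obtain ⟨c1, hc1⟩ : ∃ c1, a2 * c1 = y 1 - a3 * c0 := ⟨(y 1 - a3 * c0) / a2, by field_simp⟩
    obtain ⟨c2, hc2⟩ : ∃ c2, a2 * c2 = y 2 - a4 * c0 - a3 * c1 :=
      ⟨(y 2 - a4 * c0 - a3 * c1) / a2, by field_simp⟩
    refine ⟨(![c0, c1, c2, 0, 0], ![0, 0]), ?_⟩
    funext i
    fin_cases i
    · simp [Lmod, selMap]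
      linear_combination hc0
    · simp [Lmod, selMap]
      linear_combination hc1
    · simp [Lmod, selMap]
      linear_combination hc2
  · intro y
    refine ⟨(![y 0 / (a2 ^ 2 + g1 * h0), 0, 0, 0, 0], ![0, 0]), ?_⟩
    funext i
    fin_cases i
    simp [Lmod, selMap]
    field_simp
  · intro v hv
    have e0 := congrFun hv 0
    have e1 := congrFun hv 1
    have e2 := congrFun hv 2
    simp [Lmod, selMap, n1] at e0 e1 e2
    simp [e0, n1] at e1 e2
    simp [e1] at e2
    apply vec_zero <;> simp [e0, e1, e2]
  · intro v hv
    have e0 := congrFun hv 0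
    simp [Lmod, selMap] at e0
    have e1 : (a2 ^ 2 + g1 * h0) * v.1 0 = 0 := by linear_combination e0
    have e2 := (mul_eq_zero.mp e1).resolve_left n3
    apply vec_zero <;> simp [Lmod, e2]
  · intro v
    apply vec_zero <;> simp [Lmod]

lemma solve_two (F : Type*) [Field F] (a b c d : F) (hD : a * d - b * c ≠ 0) (p q : F) :
    ∃ x y, a * x + b * y = p ∧ c * x + d * y = q := by
  have h := mul_inv_cancel₀ hD
  refine ⟨(d * p - b * q) * (a * d - b * c)⁻¹, (a * q - c * p) * (a * d - b * c)⁻¹, ?_, ?_⟩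
  · linear_combination p * h
  · linear_combination q * h

lemma jt_Dg (F : Type*) [Field F] (a3 a4 b1 g0 g1 h1 : F) (n1 : g0 ≠ 0) (n2 : b1 ≠ 0)
    (n3 : a3 * b1 - g0 * h1 ≠ 0) (s : ℕ) :
    Module.finrank F (LinearMap.ker
      ((Lmod F 0 0 a3 a4 b1 g0 g1 0 h1 : Module.End F _) ^ s)) =
      (({3, 2, 1, 1} : Multiset ℕ).map fun p => min p s).sum := by
  apply jt_of F _ ![Sum.inl 3, Sum.inl 4, Sum.inr 1] ![Sum.inl 4]
  · intro y
    obtain ⟨c0, d0, hc0, hd0⟩ : ∃ c0 d0, a3 * c0 + g0 * d0 = y 0 ∧ h1 * c0 + b1 * d0 = y 2 := 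
      solve_two F a3 g0 h1 b1 n3 _ _
    obtain ⟨d1, hd1⟩ : ∃ d1, g0 * d1 = y 1 - a4 * c0 - g1 * d0 :=
      ⟨(y 1 - a4 * c0 - g1 * d0) / g0, by field_simp⟩
    refine ⟨(![c0, 0, 0, 0, 0], ![d0, d1]), ?_⟩
    funext i
    fin_cases i
    · simp [Lmod, selMap]
      linear_combination hc0
    · simp [Lmod, selMap]
      linear_combination hd1
    · simp [Lmod, selMap]
      linear_combination hd0
  · intro y
    refine ⟨(![0, 0, 0, 0, 0], ![y 0 / (g0 * b1), 0]), ?_⟩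
    funext i
    fin_cases i
    simp [Lmod, selMap]
    field_simp
  · intro v hv
    have e0 := congrFun hv 0
    have e1 := congrFun hv 1
    have e2 := congrFun hv 2
    simp [Lmod, selMap] at e0 e1 e2
    apply vec_zero <;> simp [e0, e1, e2]
  · intro v hv
    have e0 := congrFun hv 0
    simp [Lmod, selMap, n1] at e0
    apply vec_zero <;> simp [Lmod, e0]
  · intro v
    apply vec_zero <;> simp [Lmod]

lemma jt_Dh (F : Type*) [Field F] (a3 a4 b1 g1 h0 h1 : F) (n1 : h0 ≠ 0) (n2 : b1 ≠ 0)
    (n3 : a3 * b1 - h0 * g1 ≠ 0) (s : ℕ) :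
    Module.finrank F (LinearMap.ker
      ((Lmod F 0 0 a3 a4 b1 0 g1 h0 h1 : Module.End F _) ^ s)) =
      (({3, 2, 1, 1} : Multiset ℕ).map fun p => min p s).sum := by
  apply jt_of F _ ![Sum.inr 0, Sum.inl 4, Sum.inr 1] ![Sum.inr 1]
  · intro y
    obtain ⟨c0, hc0⟩ : ∃ c0, h0 * c0 = y 0 := ⟨y 0 / h0, by field_simp⟩
    obtain ⟨c1, d0, hc1, hd0⟩ : ∃ c1 d0, a3 * c1 + g1 * d0 = y 1 - a4 * c0 ∧
        h0 * c1 + b1 * d0 = y 2 - h1 * c0 := 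
      solve_two F a3 g1 h0 b1 (by rwa [mul_comm g1 h0]) _ _
    refine ⟨(![c0, c1, 0, 0, 0], ![d0, 0]), ?_⟩
    funext i
    fin_cases i
    · simp [Lmod, selMap]
      linear_combination hc0
    · simp [Lmod, selMap]
      linear_combination hc1
    · simp [Lmod, selMap]
      linear_combination hd0
  · intro y
    refine ⟨(![y 0 / (b1 * h0), 0, 0, 0, 0], ![0, 0]), ?_⟩
    funext i
    fin_cases i
    simp [Lmod, selMap]
    field_simp
  · intro v hv
    have e0 := congrFun hv 0
    have e1 := congrFun hv 1
    have e2 := congrFun hv 2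
    simp [Lmod, selMap, n1] at e0 e1 e2
    simp [e0] at e1 e2
    apply vec_zero <;> simp [e0, e1, e2]
  · intro v hv
    have e0 := congrFun hv 0
    simp [Lmod, selMap, n1, n2] at e0
    apply vec_zero <;> simp [Lmod, e0]
  · intro v
    apply vec_zero <;> simp [Lmod]

end Jordan

section Locus

/-- The Jordan locus. -/
def jLocus (F : Type*) [Field F] : Set (Vars 5 3 → F) :=
  {x | JordanTypeIs F (Mx F 5 3 (by norm_num) x) ({3, 2, 1, 1} : Multiset ℕ)}

lemma mem_jLocus (F : Type*) [Field F] (x : Vars 5 3 → F) :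
    x ∈ jLocus F ↔ ∀ s : ℕ, Module.finrank F (LinearMap.ker ((Lx F x : Module.End F _) ^ s)) =
      (({3, 2, 1, 1} : Multiset ℕ).map fun p => min p s).sum := by
  simp only [jLocus, JordanTypeIs, Set.mem_ofPred_eq, finrank_ker_pow]

abbrev va (i : Fin 4) : Vars 5 3 := Sum.inl i
abbrev vb : Vars 5 3 := Sum.inr (Sum.inl 0)
abbrev vg (i : Fin 2) : Vars 5 3 := Sum.inr (Sum.inr (Sum.inl i))
abbrev vh (i : Fin 2) : Vars 5 3 := Sum.inr (Sum.inr (Sum.inr i))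

lemma closure_sub (F : Type*) [Field F] (x : Vars 5 3 → F) (hx : x ∈ zClosure F 5 3 (jLocus F)) :
    x (va 0) = 0 ∧ x (va 1) * x vb = 0 ∧ x (vg 0) * x (vh 0) = 0 := by
  have h := hx (zLocus F 5 3 {MvPolynomial.X (va 0), MvPolynomial.X (va 1) * MvPolynomial.X vb,
    MvPolynomial.X (vg 0) * MvPolynomial.X (vh 0)}) ⟨⟨_, rfl⟩, by
      intro y hy
      rw [mem_jLocus] at hy
      obtain ⟨h1, h2, h3⟩ := jt_forward F _ _ _ _ _ _ _ _ _ (Lx F y) rfl hy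
      rintro p (rfl | rfl | rfl)
      · simpa using h1
      · rw [map_mul, MvPolynomial.eval_X, MvPolynomial.eval_X]
        exact h3
      · rw [map_mul, MvPolynomial.eval_X, MvPolynomial.eval_X]
        exact h2⟩
  have h1 := h (MvPolynomial.X (va 0)) (by simp)
  have h2 := h (MvPolynomial.X (va 1) * MvPolynomial.X vb) (by simp)
  have h3 := h (MvPolynomial.X (vg 0) * MvPolynomial.X (vh 0)) (by simp)
  rw [MvPolynomial.eval_X] at h1
  rw [map_mul, MvPolynomial.eval_X, MvPolynomial.eval_X] at h2 h3
  exact ⟨h1, h2, h3⟩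

/-- A point of `F^9` from its coordinates. -/
def mkPt (F : Type*) (a : Fin 4 → F) (b : F) (g h : Fin 2 → F) : Vars 5 3 → F :=
  Sum.elim a (Sum.elim (fun _ => b) (Sum.elim g h))

open MvPolynomial in
lemma sub_Cg (F : Type*) [Field F] [Infinite F] :
    coordSub F 5 3 {va 0, vb, vh 0} ⊆ zClosure F 5 3 (jLocus F) := by
  apply coordSub_dense F 5 3 _ _
    (X (va 1) * (X (va 1) ^ 2 + X (vg 0) * X (vh 1)))
    (mkPt F ![0, 1, 0, 0] 0 ![0, 0] ![0, 0])
  · rintro i (rfl | rfl | rfl) <;> simp [mkPt]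
  · simp [mkPt]
  · intro x hx hf
    simp only [map_mul, map_add, map_pow, MvPolynomial.eval_X] at hf
    have e1 := hx (va 0) (by simp)
    have e2 := hx vb (by simp)
    have e3 := hx (vh 0) (by simp)
    rw [mem_jLocus]
    unfold Lx
    rw [e1, e2, e3]
    exact jt_Cg F _ _ _ _ _ _ (left_ne_zero_of_mul hf) (right_ne_zero_of_mul hf)

open MvPolynomial in
lemma sub_Ch (F : Type*) [Field F] [Infinite F] :
    coordSub F 5 3 {va 0, vb, vg 0} ⊆ zClosure F 5 3 (jLocus F) := by
  apply coordSub_dense F 5 3 _ _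
    (X (va 1) * (X (va 1) ^ 2 + X (vg 1) * X (vh 0)))
    (mkPt F ![0, 1, 0, 0] 0 ![0, 0] ![0, 0])
  · rintro i (rfl | rfl | rfl) <;> simp [mkPt]
  · simp [mkPt]
  · intro x hx hf
    simp only [map_mul, map_add, map_pow, MvPolynomial.eval_X] at hf
    have e1 := hx (va 0) (by simp)
    have e2 := hx vb (by simp)
    have e3 := hx (vg 0) (by simp)
    rw [mem_jLocus]
    unfold Lx
    rw [e1, e2, e3]
    exact jt_Ch F _ _ _ _ _ _ (left_ne_zero_of_mul hf) (right_ne_zero_of_mul hf)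

open MvPolynomial in
lemma sub_Dg (F : Type*) [Field F] [Infinite F] :
    coordSub F 5 3 {va 0, va 1, vh 0} ⊆ zClosure F 5 3 (jLocus F) := by
  apply coordSub_dense F 5 3 _ _
    (X (vg 0) * (X vb * (X (va 2) * X vb - X (vg 0) * X (vh 1))))
    (mkPt F ![0, 0, 1, 0] 1 ![1, 0] ![0, 0])
  · rintro i (rfl | rfl | rfl) <;> simp [mkPt]
  · simp [mkPt]
  · intro x hx hf
    simp only [map_mul, map_sub, MvPolynomial.eval_X] at hf
    have e1 := hx (va 0) (by simp)
    have e2 := hx (va 1) (by simp)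
    have e3 := hx (vh 0) (by simp)
    rw [mem_jLocus]
    unfold Lx
    rw [e1, e2, e3]
    exact jt_Dg F _ _ _ _ _ _ (left_ne_zero_of_mul hf)
      (left_ne_zero_of_mul (right_ne_zero_of_mul hf))
      (right_ne_zero_of_mul (right_ne_zero_of_mul hf))

open MvPolynomial in
lemma sub_Dh (F : Type*) [Field F] [Infinite F] :
    coordSub F 5 3 {va 0, va 1, vg 0} ⊆ zClosure F 5 3 (jLocus F) := by
  apply coordSub_dense F 5 3 _ _
    (X (vh 0) * (X vb * (X (va 2) * X vb - X (vh 0) * X (vg 1))))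
    (mkPt F ![0, 0, 1, 0] 1 ![0, 0] ![1, 0])
  · rintro i (rfl | rfl | rfl) <;> simp [mkPt]
  · simp [mkPt]
  · intro x hx hf
    simp only [map_mul, map_sub, MvPolynomial.eval_X] at hf
    have e1 := hx (va 0) (by simp)
    have e2 := hx (va 1) (by simp)
    have e3 := hx (vg 0) (by simp)
    rw [mem_jLocus]
    unfold Lx
    rw [e1, e2, e3]
    exact jt_Dh F _ _ _ _ _ _ (left_ne_zero_of_mul hf)
      (left_ne_zero_of_mul (right_ne_zero_of_mul hf))
      (right_ne_zero_of_mul (right_ne_zero_of_mul hf))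

lemma mem_closure_iff' (F : Type*) [Field F] [Infinite F] (x : Vars 5 3 → F) :
    x ∈ zClosure F 5 3 (jLocus F) ↔
      x (va 0) = 0 ∧ x (va 1) * x vb = 0 ∧ x (vg 0) * x (vh 0) = 0 := by
  refine ⟨closure_sub F x, ?_⟩
  rintro ⟨h1, h2, h3⟩
  rcases mul_eq_zero.mp h2 with h2 | h2 <;> rcases mul_eq_zero.mp h3 with h3 | h3
  · apply sub_Dh F
    rintro i (rfl | rfl | rfl) <;> assumption
  · apply sub_Dg F
    rintro i (rfl | rfl | rfl) <;> assumption
  · apply sub_Ch F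
    rintro i (rfl | rfl | rfl) <;> assumption
  · apply sub_Cg F
    rintro i (rfl | rfl | rfl) <;> assumption

end Locus

/-- For `Q = (5,2)`, let `Z` be the Zariski closure of the locus of
points `x` with Jordan type of `M_x` equal to `(3,2,1,1)`. Then
`{a_1 = 0, b_1 = 0, g_0 h_0 = 0}` is strictly contained in `Z`, `Z` is not irreducible,
and `Z` has at least three irreducible components. -/
theorem statement18 (F : Type*) [Field F] [Infinite F]
    (Z : Set (Vars 5 3 → F))
    (hZ : Z = zClosure F 5 3
      {x | JordanTypeIs F (Mx F 5 3 (by norm_num) x) ({3, 2, 1, 1} : Multiset ℕ)}) :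
    {x : Vars 5 3 → F |
        x (Sum.inl ⟨0, by norm_num⟩) = 0 ∧ x (Sum.inr (Sum.inl ⟨0, by norm_num⟩)) = 0 ∧
          x (Sum.inr (Sum.inr (Sum.inl ⟨0, by norm_num⟩))) *
            x (Sum.inr (Sum.inr (Sum.inr ⟨0, by norm_num⟩))) = 0} ⊂ Z ∧
    ¬ IsZIrred F 5 3 Z ∧
    ∃ C₁ C₂ C₃ : Set (Vars 5 3 → F), C₁ ≠ C₂ ∧ C₁ ≠ C₃ ∧ C₂ ≠ C₃ ∧
      IsZComponent F 5 3 Z C₁ ∧ IsZComponent F 5 3 Z C₂ ∧ IsZComponent F 5 3 Z C₃ := by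
  have hmem : ∀ x, x ∈ Z ↔ x (va 0) = 0 ∧ x (va 1) * x vb = 0 ∧ x (vg 0) * x (vh 0) = 0 := by
    intro x
    rw [hZ]
    exact mem_closure_iff' F x
  have hp : mkPt F ![0, 0, 0, 0] 1 ![0, 0] ![0, 0] ∈ Z := by
    rw [hmem]
    simp [mkPt]
  have hq : mkPt F ![0, 1, 0, 0] 0 ![0, 0] ![0, 0] ∈ Z := by
    rw [hmem]
    simp [mkPt]
  refine ⟨⟨?_, ?_⟩, ?_, ?_⟩
  · rintro x ⟨h1, h2, h3⟩
    rw [hmem]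
    refine ⟨h1, ?_, h3⟩
    have h2' : x vb = 0 := h2
    rw [h2', mul_zero]
  · intro hsub
    have h2 := (hsub hp).2.1
    exact one_ne_zero h2
  · intro hirr
    rcases irred_prime F 5 3 Z hirr (va 1) vb (fun x hx => ((hmem x).mp hx).2.1) with h | h
    · exact one_ne_zero (h _ hq)
    · exact one_ne_zero (h _ hp)
  · refine ⟨coordSub F 5 3 {va 0, va 1, vg 0}, coordSub F 5 3 {va 0, va 1, vh 0},
      coordSub F 5 3 {va 0, vb, vg 0}, ?_, ?_, ?_, ?_, ?_, ?_⟩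
    · intro h
      have hx : mkPt F ![0, 0, 0, 0] 0 ![0, 0] ![1, 0] ∈ coordSub F 5 3 {va 0, va 1, vg 0} := by
        rintro i (rfl | rfl | rfl) <;> simp [mkPt]
      rw [h] at hx
      exact one_ne_zero (hx (vh 0) (by simp))
    · intro h
      have hx : mkPt F ![0, 0, 0, 0] 1 ![0, 0] ![0, 0] ∈ coordSub F 5 3 {va 0, va 1, vg 0} := by
        rintro i (rfl | rfl | rfl) <;> simp [mkPt]
      rw [h] at hx
      exact one_ne_zero (hx vb (by simp))
    · intro h
      have hx : mkPt F ![0, 0, 0, 0] 1 ![0, 0] ![0, 0] ∈ coordSub F 5 3 {va 0, va 1, vh 0} := by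
        rintro i (rfl | rfl | rfl) <;> simp [mkPt]
      rw [h] at hx
      exact one_ne_zero (hx vb (by simp))
    · apply comp_of F 5 3 (va 0) (va 1) vb (vg 0) (vh 0) <;> first | exact hmem | simp
    · apply comp_of F 5 3 (va 0) (va 1) vb (vh 0) (vg 0) <;>
        first | (intro x; rw [hmem, mul_comm (x (vg 0))]) | simp
    · apply comp_of F 5 3 (va 0) vb (va 1) (vg 0) (vh 0) <;>
        first | (intro x; rw [hmem, mul_comm (x (va 1))]) | simp
end
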